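/- arXiv:2108.12077 — 4 statements merged into one kernel-verified Lean document; each statement's English description precedes it below -/
import Mathlib

section
/- For all nonnegative integers i, j, l, one has 2∫_{−1}^{1} (1 − z²) P_i′(z) P_j′(z) P_l(z) dz = [i(i+1) + j(j+1) − l(l+1)] ∫_{−1}^{1} P_i(z) P_j(z) P_l(z) dz, where P_n denotes the Legendre polynomial of degree n. -/
noncomputable section

open MeasureTheory Real Filter

/-- The Legendre polynomial of degree `n`, via Rodrigues' formula. -/
def legendreP (n : ℕ) : Polynomial ℝ :=
  Polynomial.C ((2 ^ n * n.factorial : ℝ)⁻¹) *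
    Polynomial.derivative^[n] ((Polynomial.X ^ 2 - 1) ^ n)

/-- The associated Legendre function `P_l^m` (with Condon–Shortley phase),
so that `P_{|m|+2k}^{|m|}(0) = (-1)^{|m|+k} (2|m|+2k-1)!!/(2k)!!`. -/
def assocLegendre (l m : ℕ) (x : ℝ) : ℝ :=
  (-1 : ℝ) ^ m * (1 - x ^ 2) ^ ((m : ℝ) / 2) *
    (Polynomial.derivative^[m] (legendreP l)).eval x

/-- The normalizing constant `α_l^m` of the spherical harmonics. -/
def alphaY (l : ℕ) (m : ℤ) : ℝ :=
  (-1 : ℝ) ^ ((m + |m|) / 2) *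
    Real.sqrt ((2 * l + 1) * (l - m.natAbs).factorial /
      (4 * Real.pi * (l + m.natAbs).factorial))

/-- The spherical harmonic `Y_l^m` in latitude/longitude coordinates `(θ, φ)`. -/
def Ylm (l : ℕ) (m : ℤ) (θ φ : ℝ) : ℂ :=
  ((alphaY l m * assocLegendre l m.natAbs (Real.sin θ) : ℝ) : ℂ) *
    Complex.exp (Complex.I * m * φ)

/-- The surface measure `dS = cos θ dθ dφ` of the unit sphere, in the coordinate box
`[-π/2, π/2] × [-π, π)`. -/
def sphereMeasure : Measure (ℝ × ℝ) :=
  ((volume : Measure (ℝ × ℝ)).restrict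
      (Set.Icc (-(Real.pi / 2)) (Real.pi / 2) ×ˢ Set.Ico (-Real.pi) Real.pi)).withDensity
    fun p => ENNReal.ofReal (Real.cos p.1)

/-- The Fourier–Laplace coefficient `ψ̂_l^m = ∫_𝕊 ψ conj(Y_l^m) dS`. -/
def flCoeff (ψ : ℝ → ℝ → ℂ) (l : ℕ) (m : ℤ) : ℂ :=
  ∫ p : ℝ × ℝ, ψ p.1 p.2 * (starRingEnd ℂ) (Ylm l m p.1 p.2) ∂sphereMeasure

/-- Membership in the fractional Sobolev space `H^s(𝕊)`:
`ψ ∈ L²(𝕊)` and `Σ_{l,m} (l+1)^{2s} |ψ̂_l^m|² < ∞`.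
(The coefficients with `|m| > l` vanish automatically.) -/
def MemHs (s : ℝ) (ψ : ℝ → ℝ → ℂ) : Prop :=
  MeasureTheory.MemLp (fun p : ℝ × ℝ => ψ p.1 p.2) 2 sphereMeasure ∧
    Summable fun p : ℕ × ℤ =>
      ((p.1 : ℝ) + 1) ^ (2 * s) * ‖flCoeff ψ p.1 p.2‖ ^ 2

/-- The `H^s(𝕊)` norm. -/
def HsNorm (s : ℝ) (ψ : ℝ → ℝ → ℂ) : ℝ :=
  Real.sqrt (∑' p : ℕ × ℤ, ((p.1 : ℝ) + 1) ^ (2 * s) * ‖flCoeff ψ p.1 p.2‖ ^ 2)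

/-- Axially symmetric functions on the sphere: functions not depending on the longitude. -/
def Axial (ψ : ℝ → ℝ → ℂ) : Prop := ∀ θ φ₁ φ₂, ψ θ φ₁ = ψ θ φ₂

/-- Spherical (latitude/longitude) coordinates on the unit sphere of `ℝ³`. -/
def sphCoord (θ φ : ℝ) : EuclideanSpace ℝ (Fin 3) :=
  (WithLp.equiv 2 (Fin 3 → ℝ)).symm
    ![Real.cos θ * Real.cos φ, Real.cos θ * Real.sin φ, Real.sin θ]

/-- The open exterior `Ω` of the unit sphere. -/
def extDomain : Set (EuclideanSpace ℝ (Fin 3)) := {x | 1 < ‖x‖}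

/-- The closed exterior `cl Ω` of the unit sphere. -/
def closedExt : Set (EuclideanSpace ℝ (Fin 3)) := {x | 1 ≤ ‖x‖}

/-- The Laplacian of a function on `ℝ³`. -/
def lap {F : Type*} [NormedAddCommGroup F] [NormedSpace ℝ F]
    (u : EuclideanSpace ℝ (Fin 3) → F) (x : EuclideanSpace ℝ (Fin 3)) : F :=
  ∑ i : Fin 3, fderiv ℝ (fun y => fderiv ℝ u y (EuclideanSpace.single i 1)) x
    (EuclideanSpace.single i 1)

/-- The radial derivative `u_r` at a point of the unit sphere (taken from outside). -/
def radialDeriv {F : Type*} [NormedAddCommGroup F] [NormedSpace ℝ F]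
    (u : EuclideanSpace ℝ (Fin 3) → F) (θ φ : ℝ) : F :=
  derivWithin (fun r : ℝ => u (r • sphCoord θ φ)) (Set.Ici 1) 1

/-- The latitudinal derivative `u_θ` at a point of the unit sphere. -/
def thetaDeriv {F : Type*} [NormedAddCommGroup F] [NormedSpace ℝ F]
    (u : EuclideanSpace ℝ (Fin 3) → F) (θ φ : ℝ) : F :=
  deriv (fun t => u (sphCoord t φ)) θ

/-- The boundary trace on the unit sphere of a real-valued function, in coordinates. -/
def traceR (u : EuclideanSpace ℝ (Fin 3) → ℝ) (θ φ : ℝ) : ℂ := (u (sphCoord θ φ) : ℂ)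

/-- The boundary trace on the unit sphere of a complex-valued function, in coordinates. -/
def traceC (u : EuclideanSpace ℝ (Fin 3) → ℂ) (θ φ : ℝ) : ℂ := u (sphCoord θ φ)

/-- The Fourier coefficient on the equator `ℰ`. -/
def equatorCoeff (h : ℝ → ℂ) (m : ℤ) : ℂ :=
  (1 / (2 * Real.pi)) * ∫ φ in (-Real.pi)..Real.pi, h φ * Complex.exp (-(Complex.I * m * φ))

/-- Membership in the fractional Sobolev space `H^s(ℰ)` on the equator. -/
def MemHsE (s : ℝ) (h : ℝ → ℂ) : Prop :=
  MeasureTheory.MemLp h 2 (volume.restrict (Set.Ico (-Real.pi) Real.pi)) ∧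
    Summable fun m : ℤ => ((m.natAbs : ℝ) + 1) ^ (2 * s) * ‖equatorCoeff h m‖ ^ 2

/-- The `H^s(ℰ)` norm. -/
def HsNormE (s : ℝ) (h : ℝ → ℂ) : ℝ :=
  Real.sqrt (∑' m : ℤ, ((m.natAbs : ℝ) + 1) ^ (2 * s) * ‖equatorCoeff h m‖ ^ 2)

/-- The constant `β_l^m`. -/
def betaLM (l : ℕ) (m : ℤ) : ℝ :=
  Real.sqrt (((l : ℝ) - m.natAbs) * ((l : ℝ) + m.natAbs) /
    ((2 * (l : ℝ) - 1) * (2 * (l : ℝ) + 1)))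

/-- The constant `γ_l^m = -(l+1)β_l^m / (3(l+2)β_{l+1}^m)`. -/
def gammaLM (l : ℕ) (m : ℤ) : ℝ :=
  -(((l : ℝ) + 1) * betaLM l m) / (3 * ((l : ℝ) + 2) * betaLM (l + 1) m)

/-- The product `Γ_k^m = ∏_{j=1}^k γ_{|m|+2j-1}^m` (with `Γ_0^m = 1`). -/
def GammaKM (m : ℤ) (k : ℕ) : ℝ :=
  ∏ j ∈ Finset.Icc 1 k, gammaLM (m.natAbs + 2 * j - 1) m

/-- The value `α_{|m|+2k}^m P_{|m|+2k}^{|m|}(0)`. -/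
def PzeroM (m : ℤ) (k : ℕ) : ℝ :=
  alphaY (m.natAbs + 2 * k) m * assocLegendre (m.natAbs + 2 * k) m.natAbs 0

/-- The coefficient `a_l^m = f̂_l^m / (6(l+2)β_{l+1}^m)`. -/
def aCoef (f : ℝ → ℝ → ℂ) (l : ℕ) (m : ℤ) : ℂ :=
  flCoeff f l m / ((6 * ((l : ℝ) + 2) * betaLM (l + 1) m : ℝ) : ℂ)

/-- The solution of the recurrence `b_{|m|-1}^m = b_{|m|}^m = 0`,
`b_{l+1}^m = γ_l^m b_{l-1}^m + a_l^m`; here `bSeq f m n = b_{|m|-1+n}^m`. -/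
def bSeq (f : ℝ → ℝ → ℂ) (m : ℤ) : ℕ → ℂ
  | 0 => 0
  | 1 => 0
  | n + 2 => ((gammaLM (m.natAbs + n) m : ℝ) : ℂ) * bSeq f m n + aCoef f (m.natAbs + n) m

/-- The coefficient `b_l^m`. -/
def bCoef (f : ℝ → ℝ → ℂ) (l : ℕ) (m : ℤ) : ℂ := bSeq f m (l + 1 - m.natAbs)

/-- The constant `ã^m`. -/
def aTilde (f : ℝ → ℝ → ℂ) (h : ℝ → ℂ) (m : ℤ) : ℂ :=
  (equatorCoeff h m - ∑' k : ℕ, bCoef f (m.natAbs + 2 * k) m * ((PzeroM m k : ℝ) : ℂ)) /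
    (((∑' k : ℕ, GammaKM m k * PzeroM m k : ℝ)) : ℂ)

/-- The coefficient `c_l^m`: `c_{|m|+2k}^m = Γ_k^m ã^m` and `c_{|m|+2k-1}^m = 0`. -/
def cCoef (f : ℝ → ℝ → ℂ) (h : ℝ → ℂ) (l : ℕ) (m : ℤ) : ℂ :=
  if m.natAbs ≤ l ∧ (l - m.natAbs) % 2 = 0 then
    ((GammaKM m ((l - m.natAbs) / 2) : ℝ) : ℂ) * aTilde f h m
  else 0

/-- The boundary trace `v(1, θ, φ)` of the formal series solution. -/
def vTraceS (f : ℝ → ℝ → ℂ) (h : ℝ → ℂ) (θ φ : ℝ) : ℂ :=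
  ∑' p : ℕ × ℤ, (bCoef f p.1 p.2 + cCoef f h p.1 p.2) * Ylm p.1 p.2 θ φ

/-- The latitude of a point of `ℝ³`. -/
def latitude (x : EuclideanSpace ℝ (Fin 3)) : ℝ := Real.arcsin (x 2 / ‖x‖)

/-- The longitude of a point of `ℝ³`. -/
def longitude (x : EuclideanSpace ℝ (Fin 3)) : ℝ :=
  Complex.arg ((x 0 : ℂ) + (x 1 : ℂ) * Complex.I)

/-- The formal series solution `v = Σ (b_l^m + c_l^m) r^{-l-1} Y_l^m(θ, φ)`. -/
def vFun (f : ℝ → ℝ → ℂ) (h : ℝ → ℂ) (x : EuclideanSpace ℝ (Fin 3)) : ℂ :=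
  ∑' p : ℕ × ℤ, (bCoef f p.1 p.2 + cCoef f h p.1 p.2) * ((‖x‖ : ℂ) ^ (-(p.1 : ℤ) - 1)) *
    Ylm p.1 p.2 (latitude x) (longitude x)

/-- `v` is a classical solution of the linearized (oblique derivative) problem
`Δv = 0` in `Ω`, `∇d⋅∇v = -2 sin θ v_r + cos θ v_θ = f/2` on `𝕊`, `v → 0` at infinity,
`v = h` on the equator; complex-valued version. -/
def SolvesObliqueC (v : EuclideanSpace ℝ (Fin 3) → ℂ) (f : ℝ → ℝ → ℂ) (h : ℝ → ℂ) : Prop :=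
  ContDiffOn ℝ 2 v extDomain ∧ ContDiffOn ℝ 1 v closedExt ∧
    (∀ x ∈ extDomain, lap v x = 0) ∧
    (∀ θ ∈ Set.Icc (-(Real.pi / 2)) (Real.pi / 2), ∀ φ : ℝ,
      -2 * (Real.sin θ : ℂ) * radialDeriv v θ φ + (Real.cos θ : ℂ) * thetaDeriv v θ φ
        = f θ φ / 2) ∧
    Filter.Tendsto v (Bornology.cobounded _) (nhds 0) ∧
    (∀ φ : ℝ, v (sphCoord 0 φ) = h φ)

/-- Real-valued version of `SolvesObliqueC`. -/
def SolvesObliqueR (v : EuclideanSpace ℝ (Fin 3) → ℝ) (f : ℝ → ℝ → ℝ) (h : ℝ → ℝ) : Prop :=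
  ContDiffOn ℝ 2 v extDomain ∧ ContDiffOn ℝ 1 v closedExt ∧
    (∀ x ∈ extDomain, lap v x = 0) ∧
    (∀ θ ∈ Set.Icc (-(Real.pi / 2)) (Real.pi / 2), ∀ φ : ℝ,
      -2 * Real.sin θ * radialDeriv v θ φ + Real.cos θ * thetaDeriv v θ φ = f θ φ / 2) ∧
    Filter.Tendsto v (Bornology.cobounded _) (nhds 0) ∧
    (∀ φ : ℝ, v (sphCoord 0 φ) = h φ)


open Polynomial in
/-- Iterated derivatives of `(X² - 1)^n`. -/
theorem legendre_aux (n k : ℕ) :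
    (X ^ 2 - 1 : ℝ[X]) * derivative^[k + 2] ((X ^ 2 - 1) ^ n)
      + 2 * ((k : ℝ[X]) + 1) * X * derivative^[k + 1] ((X ^ 2 - 1) ^ n)
      + ((k : ℝ[X]) + 1) * (k : ℝ[X]) * derivative^[k] ((X ^ 2 - 1) ^ n)
    = 2 * (n : ℝ[X]) * X * derivative^[k + 1] ((X ^ 2 - 1) ^ n)
      + 2 * (n : ℝ[X]) * ((k : ℝ[X]) + 1) * derivative^[k] ((X ^ 2 - 1) ^ n) := by
  induction k with
  | zero =>
    have h0 : (X ^ 2 - 1 : ℝ[X]) * derivative ((X ^ 2 - 1) ^ n)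
        = 2 * (n : ℝ[X]) * X * (X ^ 2 - 1) ^ n := by
      cases n with
      | zero => simp
      | succ m =>
        simp only [derivative_pow, derivative_sub, derivative_X, derivative_one,
          Nat.add_sub_cancel, map_natCast]
        push_cast
        ring
    have h1 := congrArg derivative h0
    simp only [derivative_mul, derivative_sub, derivative_X_pow, derivative_one, derivative_X,
      derivative_natCast, derivative_ofNat] at h1
    simp only [Function.iterate_succ_apply', Function.iterate_zero, id_eq]
    push_cast at h1 ⊢
    simp only [map_ofNat] at h1
    linear_combination h1
  | succ k ih =>
    have h1 := congrArg derivative ih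
    simp only [derivative_mul, derivative_add, derivative_sub, derivative_X_pow, derivative_one,
      derivative_X, derivative_natCast, derivative_ofNat,
      ← Function.iterate_succ_apply' (derivative (R := ℝ))] at h1
    push_cast at h1 ⊢
    simp only [map_ofNat, Nat.succ_eq_add_one] at h1
    rw [show k + 1 + 2 = k + 2 + 1 from rfl, show k + 1 + 1 = k + 2 from rfl]
    rw [show k + 1 + 1 = k + 2 from rfl] at h1
    linear_combination h1

open Polynomial in
/-- The Legendre differential equation. -/
theorem legendre_ode (n : ℕ) (z : ℝ) :
    (1 - z ^ 2) * (derivative (derivative (legendreP n))).eval z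
      - 2 * z * (derivative (legendreP n)).eval z
      = - ((n : ℝ) * ((n : ℝ) + 1)) * (legendreP n).eval z := by
  have h := congrArg (eval z) (legendre_aux n n)
  simp only [Function.iterate_succ_apply'] at h
  simp only [eval_add, eval_mul, eval_sub, eval_pow, eval_X, eval_one, eval_natCast,
    eval_ofNat] at h
  simp only [legendreP, derivative_C_mul, eval_mul, eval_C]
  linear_combination (-(2 ^ n * n.factorial : ℝ)⁻¹) * h

/-- Legendre polynomial identity:
`2∫_{-1}^{1} (1-z²) P_i'(z) P_j'(z) P_l(z) dz
  = [i(i+1) + j(j+1) - l(l+1)] ∫_{-1}^{1} P_i(z) P_j(z) P_l(z) dz`. -/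
theorem legendre_derivative_product_integral_identity (i j l : ℕ) :
    2 * ∫ z in (-1 : ℝ)..1, (1 - z ^ 2) * (Polynomial.derivative (legendreP i)).eval z *
        (Polynomial.derivative (legendreP j)).eval z * (legendreP l).eval z =
      ((i : ℝ) * ((i : ℝ) + 1) + (j : ℝ) * ((j : ℝ) + 1) - (l : ℝ) * ((l : ℝ) + 1)) *
        ∫ z in (-1 : ℝ)..1,
          (legendreP i).eval z * (legendreP j).eval z * (legendreP l).eval z := by
  set p := legendreP i with hp
  set q := legendreP j with hq
  set r := legendreP l with hr
  rw [← intervalIntegral.integral_const_mul, ← intervalIntegral.integral_const_mul, ← sub_eq_zero,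
    ← intervalIntegral.integral_sub
      (Continuous.intervalIntegrable (by fun_prop) _ _)
      (Continuous.intervalIntegrable (by fun_prop) _ _)]
  rw [intervalIntegral.integral_eq_sub_of_hasDerivAt
    (f := fun z => (1 - z ^ 2) * ((Polynomial.derivative p).eval z * q.eval z * r.eval z
      + p.eval z * (Polynomial.derivative q).eval z * r.eval z
      - p.eval z * q.eval z * (Polynomial.derivative r).eval z))
    _ (Continuous.intervalIntegrable (by fun_prop) _ _)]
  · norm_num
  · intro z _
    have hi := legendre_ode i z
    have hj := legendre_ode j z
    have hl := legendre_ode l z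
    rw [← hp] at hi
    rw [← hq] at hj
    rw [← hr] at hl
    have dp := p.hasDerivAt z
    have dq := q.hasDerivAt z
    have dr := r.hasDerivAt z
    have dp' := (Polynomial.derivative p).hasDerivAt z
    have dq' := (Polynomial.derivative q).hasDerivAt z
    have dr' := (Polynomial.derivative r).hasDerivAt z
    have dw : HasDerivAt (fun z : ℝ => 1 - z ^ 2) (-(2 * z)) z := by
      simpa using (hasDerivAt_pow 2 z).const_sub 1
    refine (dw.mul ((((dp'.mul dq).mul dr).add ((dp.mul dq').mul dr)).sub
      ((dp.mul dq).mul dr'))).congr_deriv ?_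
    simp only [Pi.mul_apply, Pi.add_apply, Pi.sub_apply]
    linear_combination (q.eval z * r.eval z) * hi + (p.eval z * r.eval z) * hj
      - (p.eval z * q.eval z) * hl

end
end

section
/- Let s > 1 and let u, v be harmonic functions in the exterior Ω of the unit sphere 𝕊 ⊂ ℝ³, continuous up to 𝕊, tending to 0 as |x| → ∞, and with boundary traces u|_𝕊, v|_𝕊 ∈ H^{s+1}_ax(𝕊). Then |∇u|² and |∇v|² restricted to 𝕊 belong to H^s_ax(𝕊) and there is a constant C > 0 independent of u, v such that ‖|∇u|²‖_{H^s(𝕊)} ≤ C ‖u‖²_{H^{s+1}(𝕊)} and ‖|∇u|² − |∇v|²‖_{H^s(𝕊)} ≤ C (‖u‖_{H^{s+1}(𝕊)} + ‖v‖_{H^{s+1}(𝕊)}) ‖u − v‖_{H^{s+1}(𝕊)}. -/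
noncomputable section

open MeasureTheory Real Filter

/-- `|∇w|² = w_r² + w_θ²` on the unit sphere, for axially symmetric functions. -/
def gradSqS (u : EuclideanSpace ℝ (Fin 3) → ℝ) (θ φ : ℝ) : ℂ :=
  ((radialDeriv u θ φ ^ 2 + thetaDeriv u θ φ ^ 2 : ℝ) : ℂ)

/-! ### Legendre polynomials: algebraic identities -/

section LegendreAlgebra
open Polynomial

lemma iter_X_mul (p : ℝ[X]) (n : ℕ) :
    derivative^[n + 1] (X * p) = X * derivative^[n + 1] p + ((n : ℝ[X]) + 1) * derivative^[n] p := by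
  induction n with
  | zero => simp [derivative_mul]; ring
  | succ n ih =>
    rw [Function.iterate_succ_apply', ih, Function.iterate_succ_apply' _ (n + 1) p]
    simp only [derivative_add, derivative_mul, derivative_X, derivative_natCast, derivative_one,
      ← Function.iterate_succ_apply' (f := (derivative : ℝ[X] →ₗ[ℝ] ℝ[X])) , Nat.succ_eq_add_one]
    push_cast
    ring

lemma iter_X2_mul (p : ℝ[X]) (n : ℕ) :
    derivative^[n + 1] ((X ^ 2 - 1) * derivative p) = (X ^ 2 - 1) * derivative^[n + 2] p
      + 2 * ((n : ℝ[X]) + 1) * X * derivative^[n + 1] p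
      + (n : ℝ[X]) * ((n : ℝ[X]) + 1) * derivative^[n] p := by
  induction n with
  | zero => simp [derivative_mul]; ring
  | succ n ih =>
    rw [Function.iterate_succ_apply', ih]
    have h2 : derivative (derivative^[n + 2] p) = derivative^[n + 3] p :=
      (Function.iterate_succ_apply' _ _ _).symm
    have h1 : derivative (derivative^[n + 1] p) = derivative^[n + 2] p :=
      (Function.iterate_succ_apply' _ _ _).symm
    have h0 : derivative (derivative^[n] p) = derivative^[n + 1] p :=
      (Function.iterate_succ_apply' _ _ _).symm
    have hc : derivative (2 : ℝ[X]) = 0 := by simp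
    simp only [derivative_add, derivative_sub, derivative_mul, derivative_X, derivative_natCast,
      derivative_one, derivative_X_pow, h2, h1, h0, hc]
    simp only [Nat.cast_ofNat, map_ofNat]
    push_cast
    ring

/-- Rodrigues without the constant. -/
def rodr (n : ℕ) : ℝ[X] := derivative^[n] ((X ^ 2 - 1) ^ n)

lemma legendreP_eq (n : ℕ) : legendreP n = C ((2 ^ n * n.factorial : ℝ)⁻¹) * rodr n := rfl

lemma rodr_eq (n : ℕ) : rodr n = C ((2 ^ n * n.factorial : ℝ)) * legendreP n := by
  rw [legendreP_eq, ← mul_assoc, ← C_mul, mul_inv_cancel₀ (by positivity)]; simp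

lemma rodr_A (n : ℕ) : derivative (rodr (n + 1)) =
    2 * ((n : ℝ[X]) + 1) * (X * derivative (rodr n) + ((n : ℝ[X]) + 1) * rodr n) := by
  unfold rodr
  rw [← Function.iterate_succ_apply' (f := (derivative : ℝ[X] →ₗ[ℝ] ℝ[X])), Nat.succ_eq_add_one,
    ← Function.iterate_succ_apply' (f := (derivative : ℝ[X] →ₗ[ℝ] ℝ[X])), Nat.succ_eq_add_one,
    ← iter_X_mul, Function.iterate_succ_apply]
  have : derivative ((X ^ 2 - 1 : ℝ[X]) ^ (n + 1)) = C (2 * ((n : ℝ) + 1)) * (X * (X ^ 2 - 1) ^ n) := by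
    rw [derivative_pow]; simp [map_ofNat C]; ring
  rw [this, iterate_derivative_C_mul]; simp [map_ofNat C]

lemma rodr_ode (n : ℕ) : (X ^ 2 - 1) * derivative (derivative (rodr n)) +
    2 * X * derivative (rodr n) - (n : ℝ[X]) * ((n : ℝ[X]) + 1) * rodr n = 0 := by
  have h := iter_X2_mul ((X ^ 2 - 1) ^ n) n
  have e : (X ^ 2 - 1 : ℝ[X]) * derivative ((X ^ 2 - 1 : ℝ[X]) ^ n) = C (2 * (n : ℝ)) * (X * (X ^ 2 - 1) ^ n) := by
    rw [derivative_pow]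
    rcases n with _ | n
    · simp
    · simp [map_ofNat C]; ring
  rw [e, iterate_derivative_C_mul, iter_X_mul] at h
  have h2 : derivative (derivative (rodr n)) = derivative^[n + 2] ((X ^ 2 - 1 : ℝ[X]) ^ n) := by
    simp only [rodr, Function.iterate_succ_apply']
  have h1 : derivative (rodr n) = derivative^[n + 1] ((X ^ 2 - 1 : ℝ[X]) ^ n) := by
    simp only [rodr, Function.iterate_succ_apply']
  rw [h2, h1]
  have hc : (C (2 * (n : ℝ)) : ℝ[X]) = 2 * (n : ℝ[X]) := by simp [map_ofNat C]
  rw [hc] at h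
  unfold rodr
  linear_combination -h

lemma C_ne_aux {c : ℝ} (hc : c ≠ 0) {p q : ℝ[X]} (h : C c * p = C c * q) : p = q :=
  mul_left_cancel₀ (C_ne_zero.mpr hc) h

lemma leg_A (n : ℕ) : derivative (legendreP (n + 1)) =
    X * derivative (legendreP n) + ((n : ℝ[X]) + 1) * legendreP n := by
  have h := rodr_A n
  rw [rodr_eq, rodr_eq] at h
  simp only [derivative_C_mul] at h
  apply C_ne_aux (c := 2 ^ (n + 1) * (n + 1).factorial) (by positivity)
  rw [h]
  have : (C ((2 : ℝ) ^ (n + 1) * ((n + 1).factorial : ℝ)) : ℝ[X])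
      = 2 * ((n : ℝ[X]) + 1) * C ((2 : ℝ) ^ n * (n.factorial : ℝ)) := by
    rw [Nat.factorial_succ]; simp [map_ofNat C]; ring
  rw [this]; ring

lemma leg_ode (n : ℕ) : (X ^ 2 - 1) * derivative (derivative (legendreP n)) +
    2 * X * derivative (legendreP n) - (n : ℝ[X]) * ((n : ℝ[X]) + 1) * legendreP n = 0 := by
  have h := rodr_ode n
  rw [rodr_eq] at h
  simp only [derivative_C_mul] at h
  apply C_ne_aux (c := 2 ^ n * n.factorial) (by positivity)
  rw [mul_zero, ← h]; ring

lemma leg_zero : legendreP 0 = 1 := by simp [legendreP]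

lemma leg_one_eval (n : ℕ) : (legendreP n).eval 1 = 1 := by
  induction n with
  | zero => simp [leg_zero]
  | succ n ih =>
    have hA := congrArg (eval 1) (leg_A n)
    have h1 := congrArg (eval 1) (leg_ode n)
    have h2 := congrArg (eval 1) (leg_ode (n + 1))
    simp only [eval_mul, eval_add, eval_sub, eval_pow, eval_X, eval_one, eval_natCast, eval_zero,
      eval_ofNat, ih] at hA h1 h2
    push_cast at h2
    have : ((n : ℝ) + 1) * (n + 2) * (eval 1 (legendreP (n + 1)) - 1) = 0 := by
      linear_combination (-1 : ℝ) * h2 + 2 * hA + h1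
    have hp : ((n : ℝ) + 1) * (n + 2) ≠ 0 := by positivity
    have := (mul_eq_zero.mp this).resolve_left hp
    linarith

lemma leg_neg_one_eval (n : ℕ) : (legendreP n).eval (-1) = (-1) ^ n := by
  induction n with
  | zero => simp [leg_zero]
  | succ n ih =>
    have hA := congrArg (eval (-1)) (leg_A n)
    have h1 := congrArg (eval (-1)) (leg_ode n)
    have h2 := congrArg (eval (-1)) (leg_ode (n + 1))
    simp only [eval_mul, eval_add, eval_sub, eval_pow, eval_X, eval_one, eval_natCast, eval_zero,
      eval_ofNat, ih] at hA h1 h2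
    push_cast at h2
    have : ((n : ℝ) + 1) * (n + 2) * (eval (-1) (legendreP (n + 1)) + (-1) ^ n) = 0 := by
      linear_combination (-1 : ℝ) * h2 - 2 * hA  - h1
    have hp : ((n : ℝ) + 1) * (n + 2) ≠ 0 := by positivity
    have := (mul_eq_zero.mp this).resolve_left hp
    rw [pow_succ]; linarith

lemma eq_zero_of_deriv {p : ℝ[X]} (h : derivative p = 0) (h1 : p.eval 1 = 0) : p = 0 := by
  rw [eq_C_of_derivative_eq_zero h] at h1 ⊢
  simp at h1; simp [h1]

lemma leg_B (n : ℕ) : (1 - X ^ 2) * derivative (legendreP n) =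
    ((n : ℝ[X]) + 1) * (X * legendreP n - legendreP (n + 1)) := by
  rw [← sub_eq_zero]
  apply eq_zero_of_deriv
  · have h1 := leg_A n
    have h2 := leg_ode n
    simp only [derivative_sub, derivative_mul, derivative_one, derivative_X_pow, derivative_add,
      derivative_natCast, derivative_X, h1]
    simp only [Nat.cast_ofNat, map_ofNat]
    linear_combination (-1) * h2
  · simp [leg_one_eval]

lemma leg_B' (n : ℕ) : (1 - X ^ 2) * derivative (legendreP (n + 1)) =
    ((n : ℝ[X]) + 1) * (legendreP n - X * legendreP (n + 1)) := by
  rw [leg_A]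
  linear_combination X * leg_B n

lemma leg_rec (n : ℕ) : ((n : ℝ[X]) + 2) * legendreP (n + 2) =
    (2 * (n : ℝ[X]) + 3) * X * legendreP (n + 1) - ((n : ℝ[X]) + 1) * legendreP n := by
  have h1 := leg_B (n + 1)
  have h2 := leg_B' n
  push_cast at h1
  linear_combination h1 - h2

lemma leg_one : legendreP 1 = X := by
  have := leg_B 0
  simp [leg_zero] at this
  linear_combination this

lemma leg_natDegree (n : ℕ) : (legendreP n).natDegree ≤ n := by
  refine (natDegree_C_mul_le _ _).trans ((natDegree_iterate_derivative _ _).trans ?_)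
  have : ((X ^ 2 - 1 : ℝ[X]) ^ n).natDegree ≤ n * 2 := by
    refine natDegree_pow_le.trans ?_
    gcongr
    compute_degree
  omega

/-! ### Pointwise bounds -/

/-- The Sonin-type function controlling `P_n` and its derivative. -/
lemma leg_bound (n : ℕ) {x : ℝ} (hx : x ∈ Set.Icc (-1 : ℝ) 1) :
    ((n : ℝ) * (n + 1)) * (legendreP n).eval x ^ 2 + (1 - x ^ 2) * (derivative (legendreP n)).eval x ^ 2
      ≤ (n : ℝ) * (n + 1) := by
  set F : ℝ[X] := (n : ℝ[X]) * ((n : ℝ[X]) + 1) * legendreP n ^ 2 + (1 - X ^ 2) * derivative (legendreP n) ^ 2 with hF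
  have hd : derivative F = 2 * X * derivative (legendreP n) ^ 2 := by
    simp only [hF, derivative_sub, derivative_mul, derivative_one, derivative_X_pow, derivative_add,
      derivative_natCast, derivative_pow, derivative_X]
    simp only [Nat.cast_ofNat, map_ofNat]
    linear_combination (-2) * derivative (legendreP n) * leg_ode n
  have hev : ∀ y, F.eval y = ((n : ℝ) * (n + 1)) * (legendreP n).eval y ^ 2 +
      (1 - y ^ 2) * (derivative (legendreP n)).eval y ^ 2 := by intro y; simp [hF]
  rw [← hev]
  have h1 : F.eval 1 = (n : ℝ) * (n + 1) := by rw [hev, leg_one_eval]; ring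
  have h2 : F.eval (-1) = (n : ℝ) * (n + 1) := by
    rw [hev, leg_neg_one_eval, ← pow_mul, mul_comm n 2, pow_mul]; norm_num
  rcases le_total 0 x with h0 | h0
  · have : MonotoneOn (fun y => F.eval y) (Set.Icc 0 1) := by
      apply monotoneOn_of_deriv_nonneg (convex_Icc _ _) F.continuous.continuousOn
        F.differentiable.differentiableOn
      intro y hy
      rw [interior_Icc] at hy
      rw [Polynomial.deriv, hd]
      simp only [eval_mul, eval_pow, eval_X, eval_ofNat]
      have := hy.1
      positivity
    rw [← h1]
    exact this ⟨h0, hx.2⟩ ⟨by norm_num, le_rfl⟩ hx.2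
  · have : AntitoneOn (fun y => F.eval y) (Set.Icc (-1) 0) := by
      apply antitoneOn_of_deriv_nonpos (convex_Icc _ _) F.continuous.continuousOn
        F.differentiable.differentiableOn
      intro y hy
      rw [interior_Icc] at hy
      rw [Polynomial.deriv, hd]
      simp only [eval_mul, eval_pow, eval_X, eval_ofNat]
      have := hy.2
      nlinarith [sq_nonneg (eval y (derivative (legendreP n)))]
    rw [← h2]
    exact this ⟨le_rfl, by norm_num⟩ ⟨hx.1, h0⟩ hx.1

lemma leg_abs_le (n : ℕ) {x : ℝ} (hx : x ∈ Set.Icc (-1 : ℝ) 1) : |(legendreP n).eval x| ≤ 1 := by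
  rcases Nat.eq_zero_or_pos n with rfl | hn
  · simp [leg_zero]
  have h := leg_bound n hx
  have hn' : (0 : ℝ) < (n : ℝ) * (n + 1) := by positivity
  have hx2 : 0 ≤ 1 - x ^ 2 := by nlinarith [hx.1, hx.2]
  have h3 : ((n : ℝ) * (n + 1)) * (legendreP n).eval x ^ 2 ≤ (n : ℝ) * (n + 1) * 1 := by
    nlinarith [mul_nonneg hx2 (sq_nonneg ((derivative (legendreP n)).eval x))]
  have h4 := le_of_mul_le_mul_left h3 hn'
  exact (sq_le_one_iff_abs_le_one _).mp h4

lemma leg_deriv_abs_le (n : ℕ) (t : ℝ) :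
    |(derivative (legendreP n)).eval (sin t) * cos t| ≤ (n : ℝ) + 1 := by
  have h := leg_bound n (x := sin t) ⟨neg_one_le_sin t, sin_le_one t⟩
  have hc : 1 - sin t ^ 2 = cos t ^ 2 := by rw [← sin_sq_add_cos_sq t]; ring
  rw [hc] at h
  apply abs_le_of_sq_le_sq _ (by positivity)
  have : 0 ≤ (n : ℝ) * (n + 1) * (legendreP n).eval (sin t) ^ 2 := by positivity
  have hn : (0 : ℝ) ≤ n := by positivity
  nlinarith

/-! ### Orthogonality -/

/-- Integration of polynomials over `[-1,1]`. -/
def polyI (p : ℝ[X]) : ℝ := ∫ x in (-1 : ℝ)..1, p.eval x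

lemma polyI_add (p q : ℝ[X]) : polyI (p + q) = polyI p + polyI q := by
  simp only [polyI, eval_add]
  exact intervalIntegral.integral_add (p.continuous.intervalIntegrable _ _)
    (q.continuous.intervalIntegrable _ _)

lemma polyI_C_mul (c : ℝ) (p : ℝ[X]) : polyI (C c * p) = c * polyI p := by
  simp [polyI]

/-- `polyI` as a linear map. -/
def polyIL : ℝ[X] →ₗ[ℝ] ℝ where
  toFun := polyI
  map_add' := polyI_add
  map_smul' c p := by rw [smul_eq_C_mul, polyI_C_mul]; rfl

lemma polyI_sub (p q : ℝ[X]) : polyI (p - q) = polyI p - polyI q := polyIL.map_sub p q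

lemma polyI_derivative (p : ℝ[X]) : polyI (derivative p) = p.eval 1 - p.eval (-1) := by
  unfold polyI
  exact intervalIntegral.integral_eq_sub_of_hasDerivAt (fun x _ => p.hasDerivAt x)
    (p.derivative.continuous.intervalIntegrable _ _)

lemma leg_orth {n m : ℕ} (h : n ≠ m) : polyI (legendreP n * legendreP m) = 0 := by
  have h1 := polyI_derivative ((1 - X ^ 2) * (legendreP n * derivative (legendreP m) -
    derivative (legendreP n) * legendreP m))
  have h2 : derivative ((1 - X ^ 2) * (legendreP n * derivative (legendreP m) -
    derivative (legendreP n) * legendreP m)) =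
      C ((n : ℝ) * (n + 1) - m * (m + 1)) * (legendreP n * legendreP m) := by
    simp only [derivative_sub, derivative_mul, derivative_one, derivative_X_pow]
    simp only [Nat.cast_ofNat, map_ofNat, map_sub, map_mul, map_natCast, map_add, map_one]
    linear_combination legendreP m * leg_ode n - legendreP n * leg_ode m
  rw [h2, polyI_C_mul] at h1
  have h3 : ((n : ℝ) * (n + 1) - m * (m + 1)) ≠ 0 := by
    have : ((n : ℝ) - m) * (n + m + 1) ≠ 0 := by
      apply mul_ne_zero
      · rw [sub_ne_zero]; exact_mod_cast h
      · positivity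
    intro h'; apply this; linear_combination h'
  have h4 : ((n : ℝ) * (n + 1) - m * (m + 1)) * polyI (legendreP n * legendreP m) = 0 := by
    rw [h1]; simp
  exact (mul_eq_zero.mp h4).resolve_left h3

lemma leg_norm (n : ℕ) : (2 * (n : ℝ) + 1) * polyI (legendreP n * legendreP n) = 2 := by
  have key : ∀ n : ℕ, (2 * (n : ℝ) + 3) * polyI (legendreP (n + 1) * legendreP (n + 1)) =
      (2 * (n : ℝ) + 1) * polyI (legendreP n * legendreP n) := by
    intro n
    -- E1 : from recurrence at n+2 times P_n
    have e1 : (2 * (n : ℝ) + 3) * polyI (X * legendreP (n + 1) * legendreP n) =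
        ((n : ℝ) + 1) * polyI (legendreP n * legendreP n) := by
      have h := congrArg polyI (congrArg (· * legendreP n) (leg_rec n))
      have hl : ((n : ℝ[X]) + 2) * legendreP (n + 2) * legendreP n =
        C ((n : ℝ) + 2) * (legendreP (n + 2) * legendreP n) := by simp [map_ofNat C]; ring
      have hr : ((2 * (n : ℝ[X]) + 3) * X * legendreP (n + 1) - ((n : ℝ[X]) + 1) * legendreP n) *
        legendreP n = C (2 * (n : ℝ) + 3) * (X * legendreP (n + 1) * legendreP n) -
          C ((n : ℝ) + 1) * (legendreP n * legendreP n) := by simp [map_ofNat C]; ring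
      simp only [hl, hr, polyI_C_mul, polyI_sub] at h
      rw [leg_orth (by omega)] at h
      linarith
    have e2 : ((n : ℝ) + 1) * polyI (legendreP (n + 1) * legendreP (n + 1)) =
        (2 * (n : ℝ) + 1) * polyI (X * legendreP (n + 1) * legendreP n) := by
      rcases n with _ | n
      · simp only [leg_zero, zero_add, leg_one]; simp
      · have h := congrArg polyI (congrArg (· * legendreP (n + 2)) (leg_rec n))
        have hl : ((n : ℝ[X]) + 2) * legendreP (n + 2) * legendreP (n + 2) =
          C ((n : ℝ) + 2) * (legendreP (n + 2) * legendreP (n + 2)) := by simp [map_ofNat C]; ring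
        have hr : ((2 * (n : ℝ[X]) + 3) * X * legendreP (n + 1) - ((n : ℝ[X]) + 1) * legendreP n) *
          legendreP (n + 2) = C (2 * (n : ℝ) + 3) * (X * legendreP (n + 2) * legendreP (n + 1)) -
            C ((n : ℝ) + 1) * (legendreP n * legendreP (n + 2)) := by simp [map_ofNat C]; ring
        simp only [hl, hr, polyI_C_mul, polyI_sub] at h
        rw [leg_orth (n := n) (m := n + 2) (by omega)] at h
        push_cast
        linear_combination h
    have : ((n : ℝ) + 1) ≠ 0 := by positivity
    apply mul_left_cancel₀ this
    linear_combination (2 * (n : ℝ) + 3) * e2 + (2 * (n : ℝ) + 1) * e1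
  induction n with
  | zero => simp [leg_zero, polyI]; norm_num
  | succ n ih => have := key n; push_cast; linarith

lemma leg_X_mul (n : ℕ) : ∃ a b : ℝ, ∃ k ≤ n, X * legendreP n = C a * legendreP (n + 1) + C b * legendreP k := by
  rcases n with _ | n
  · exact ⟨1, 0, 0, le_rfl, by simp [leg_zero, leg_one]⟩
  · refine ⟨((n : ℝ) + 2) / (2 * n + 3), ((n : ℝ) + 1) / (2 * n + 3), n, by omega, ?_⟩
    have hp : (2 * (n : ℝ) + 3) ≠ 0 := by positivity
    apply C_ne_aux hp
    rw [mul_add, ← mul_assoc (C _) (C _), ← mul_assoc (C _) (C _), ← C_mul, ← C_mul,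
      mul_div_cancel₀ _ hp, mul_div_cancel₀ _ hp]
    have := leg_rec n
    simp [map_ofNat C]
    linear_combination -this

lemma leg_orth_X_pow (j : ℕ) : ∀ n L : ℕ, j + n < L → polyI (X ^ j * legendreP n * legendreP L) = 0 := by
  induction j with
  | zero => intro n L h; simpa using leg_orth (by omega)
  | succ j ih =>
    intro n L h
    obtain ⟨a, b, k, hk, e⟩ := leg_X_mul n
    have : X ^ (j + 1) * legendreP n * legendreP L = C a * (X ^ j * legendreP (n + 1) * legendreP L) +
        C b * (X ^ j * legendreP k * legendreP L) := by
      rw [pow_succ]; linear_combination X ^ j * legendreP L * e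
    rw [this, polyI_add, polyI_C_mul, polyI_C_mul, ih _ _ (by omega), ih _ _ (by omega)]; simp

lemma leg_orth_deg (p : ℝ[X]) (L : ℕ) (h : p.natDegree < L) : polyI (p * legendreP L) = 0 := by
  rw [p.as_sum_range_C_mul_X_pow, Finset.sum_mul]
  change polyIL _ = 0
  rw [map_sum]
  apply Finset.sum_eq_zero
  intro i hi
  have := leg_orth_X_pow i 0 L (by simp at hi; omega)
  rw [leg_zero, mul_one] at this
  change polyI _ = 0
  rw [mul_assoc, polyI_C_mul, this, mul_zero]

/-- `∫ (1-x²) P_n' P_m' = n(n+1) ∫ P_n P_m`. -/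
lemma leg_deriv_orth (n m : ℕ) : polyI ((1 - X ^ 2) * derivative (legendreP n) * derivative (legendreP m)) =
    (n : ℝ) * (n + 1) * polyI (legendreP n * legendreP m) := by
  have h1 := polyI_derivative ((1 - X ^ 2) * derivative (legendreP n) * legendreP m)
  have h2 : derivative ((1 - X ^ 2) * derivative (legendreP n) * legendreP m) =
      (1 - X ^ 2) * derivative (legendreP n) * derivative (legendreP m) -
      C ((n : ℝ) * (n + 1)) * (legendreP n * legendreP m) := by
    simp only [derivative_sub, derivative_mul, derivative_one, derivative_X_pow]
    simp only [Nat.cast_ofNat, map_ofNat, map_mul, map_natCast, map_add, map_one]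
    linear_combination - legendreP m * leg_ode n
  rw [h2, polyI_sub, polyI_C_mul] at h1
  simp at h1
  linarith

end LegendreAlgebra

/-! ### The zonal inner product -/

/-- Integral over the sphere of an axial function of the latitude. -/
def Jn (F : ℝ → ℝ) : ℝ := 2 * Real.pi * ∫ t in (-(Real.pi / 2))..(Real.pi / 2), F t * cos t

/-- Normalization constant of zonal harmonics. -/
def al (l : ℕ) : ℝ := alphaY l 0

lemma al_eq (l : ℕ) : al l = Real.sqrt ((2 * l + 1) / (4 * Real.pi)) := by
  have h : (l.factorial : ℝ) ≠ 0 := by positivity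
  simp only [al, alphaY]
  simp
  congr 1
  field_simp

lemma al_pos (l : ℕ) : 0 < al l := by rw [al_eq]; positivity

lemma al_sq (l : ℕ) : al l ^ 2 = (2 * l + 1) / (4 * Real.pi) := by
  rw [al_eq, Real.sq_sqrt (by positivity)]

lemma al_sq_le (l : ℕ) : al l ^ 2 ≤ l + 1 := by
  rw [al_sq, div_le_iff₀ (by positivity)]
  nlinarith [Real.pi_gt_three, (Nat.cast_nonneg l : (0 : ℝ) ≤ l)]

/-- Normalized zonal harmonic as a function of latitude. -/
def yb (l : ℕ) (t : ℝ) : ℝ := al l * (legendreP l).eval (sin t)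

/-- Its derivative. -/
def zb (l : ℕ) (t : ℝ) : ℝ := al l * ((legendreP l).derivative.eval (sin t) * cos t)

@[fun_prop] lemma yb_cont (l : ℕ) : Continuous (yb l) := by
  unfold yb; exact continuous_const.mul ((legendreP l).continuous.comp continuous_sin)

@[fun_prop] lemma zb_cont (l : ℕ) : Continuous (zb l) := by
  unfold zb
  exact continuous_const.mul (((legendreP l).derivative.continuous.comp continuous_sin).mul continuous_cos)

lemma yb_hasDerivAt (l : ℕ) (t : ℝ) : HasDerivAt (yb l) (zb l t) t := by
  unfold yb zb
  exact (((legendreP l).hasDerivAt (sin t)).comp t (hasDerivAt_sin t)).const_mul _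

lemma yb_abs_le (l : ℕ) (t : ℝ) : |yb l t| ≤ al l := by
  unfold yb
  rw [abs_mul, abs_of_pos (al_pos l)]
  exact mul_le_of_le_one_right (al_pos l).le (leg_abs_le l ⟨neg_one_le_sin t, sin_le_one t⟩)

lemma zb_abs_le (l : ℕ) (t : ℝ) : |zb l t| ≤ ((l : ℝ) + 1) * al l := by
  unfold zb
  rw [abs_mul, abs_of_pos (al_pos l), mul_comm]
  exact mul_le_mul_of_nonneg_right (leg_deriv_abs_le l t) (al_pos l).le

lemma Jn_int {F : ℝ → ℝ} (hF : Continuous F) :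
    IntervalIntegrable (fun t => F t * cos t) volume (-(Real.pi / 2)) (Real.pi / 2) :=
  (hF.mul continuous_cos).intervalIntegrable _ _

lemma Jn_add {F G : ℝ → ℝ} (hF : Continuous F) (hG : Continuous G) :
    Jn (fun t => F t + G t) = Jn F + Jn G := by
  simp only [Jn, add_mul]
  rw [intervalIntegral.integral_add (Jn_int hF) (Jn_int hG), mul_add]

lemma Jn_sub {F G : ℝ → ℝ} (hF : Continuous F) (hG : Continuous G) :
    Jn (fun t => F t - G t) = Jn F - Jn G := by
  simp only [Jn, sub_mul]
  rw [intervalIntegral.integral_sub (Jn_int hF) (Jn_int hG), mul_sub]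

lemma Jn_const_mul (c : ℝ) (F : ℝ → ℝ) : Jn (fun t => c * F t) = c * Jn F := by
  simp only [Jn, mul_assoc c]
  rw [intervalIntegral.integral_const_mul]; ring

lemma Jn_sum {ι : Type*} (S : Finset ι) {F : ι → ℝ → ℝ} (hF : ∀ i, Continuous (F i)) :
    Jn (fun t => ∑ i ∈ S, F i t) = ∑ i ∈ S, Jn (F i) := by
  simp only [Jn, Finset.sum_mul]
  rw [intervalIntegral.integral_finsetSum (fun i _ => Jn_int (hF i)), Finset.mul_sum]

lemma Jn_mono {F G : ℝ → ℝ} (hF : Continuous F) (hG : Continuous G) (h : ∀ t, F t ≤ G t) :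
    Jn F ≤ Jn G := by
  unfold Jn
  apply mul_le_mul_of_nonneg_left _ (by positivity)
  apply intervalIntegral.integral_mono_on (by linarith [Real.pi_pos]) (Jn_int hF) (Jn_int hG)
  intro t ht
  exact mul_le_mul_of_nonneg_right (h t) (cos_nonneg_of_mem_Icc ht)

lemma Jn_nonneg {F : ℝ → ℝ} (h : ∀ t, 0 ≤ F t) : 0 ≤ Jn F := by
  unfold Jn
  apply mul_nonneg (by positivity)
  apply intervalIntegral.integral_nonneg (by linarith [Real.pi_pos])
  intro t ht
  exact mul_nonneg (h t) (cos_nonneg_of_mem_Icc ht)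

lemma Jn_tendsto {F : ℕ → ℝ → ℝ} {G : ℝ → ℝ} {C : ℝ} (hF : ∀ n, Continuous (F n))
    (hb : ∀ n t, |F n t| ≤ C) (hl : ∀ t, Tendsto (fun n => F n t) atTop (nhds (G t))) :
    Tendsto (fun n => Jn (F n)) atTop (nhds (Jn G)) := by
  unfold Jn
  apply Tendsto.const_mul
  apply intervalIntegral.tendsto_integral_filter_of_dominated_convergence (fun _ => C)
  · exact Eventually.of_forall fun n => ((hF n).mul continuous_cos).aestronglyMeasurable
  · refine Eventually.of_forall fun n => Eventually.of_forall fun t _ => ?_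
    rw [norm_mul, Real.norm_eq_abs, Real.norm_eq_abs]
    have := abs_cos_le_one t
    have h1 := hb n t
    have h2 := abs_nonneg (F n t)
    nlinarith [abs_nonneg (cos t)]
  · exact intervalIntegrable_const
  · exact Eventually.of_forall fun t _ => (hl t).mul_const _

lemma Jn_poly (p : Polynomial ℝ) : Jn (fun t => p.eval (sin t)) = 2 * Real.pi * polyI p := by
  unfold Jn polyI
  congr 1
  have := intervalIntegral.integral_comp_mul_deriv (a := -(Real.pi / 2)) (b := Real.pi / 2)
    (f := sin) (f' := cos) (g := fun x => p.eval x)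
    (fun x _ => hasDerivAt_sin x) continuous_cos.continuousOn p.continuous
  simpa using this

lemma Jn_yy (l k : ℕ) : Jn (fun t => yb l t * yb k t) = if l = k then 1 else 0 := by
  have : (fun t => yb l t * yb k t) = fun t => (al l * al k) * (legendreP l * legendreP k).eval (sin t) := by
    funext t; simp [yb]; ring
  rw [this, Jn_const_mul, Jn_poly]
  split_ifs with h
  · subst h
    have h1 := leg_norm l
    have h2 := al_sq l
    have h3 : polyI (legendreP l * legendreP l) = 2 / (2 * l + 1) := by
      field_simp; linarith
    rw [← pow_two, h2, h3]
    field_simp; norm_num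
  · rw [leg_orth h]; ring

lemma Jn_zz (l k : ℕ) : Jn (fun t => zb l t * zb k t) = if l = k then (l : ℝ) * (l + 1) else 0 := by
  have h1 : (fun t => zb l t * zb k t) = fun t => (al l * al k) *
      ((1 - Polynomial.X ^ 2) * (legendreP l).derivative * (legendreP k).derivative).eval (sin t) := by
    funext t
    have hc : 1 - sin t ^ 2 = cos t ^ 2 := by rw [← sin_sq_add_cos_sq t]; ring
    simp [zb, hc]; ring
  have h2 : (fun t => yb l t * yb k t) = fun t => (al l * al k) * (legendreP l * legendreP k).eval (sin t) := by
    funext t; simp [yb]; ring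
  have h3 := Jn_yy l k
  rw [h2, Jn_const_mul, Jn_poly] at h3
  rw [h1, Jn_const_mul, Jn_poly, leg_deriv_orth]
  have : al l * al k * (2 * Real.pi * (↑l * (↑l + 1) * polyI (legendreP l * legendreP k))) =
    (↑l * (↑l + 1)) * (al l * al k * (2 * Real.pi * (polyI (legendreP l * legendreP k)))) := by ring
  rw [this, h3]; split_ifs <;> simp

lemma Jn_yyy {l k L : ℕ} (h : l + k < L) : Jn (fun t => yb l t * yb k t * yb L t) = 0 := by
  have : (fun t => yb l t * yb k t * yb L t) = fun t => (al l * al k * al L) *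
      (legendreP l * legendreP k * legendreP L).eval (sin t) := by
    funext t; simp [yb]; ring
  rw [this, Jn_const_mul, Jn_poly, leg_orth_deg]
  · ring
  · refine lt_of_le_of_lt (Polynomial.natDegree_mul_le) ?_
    have := leg_natDegree l
    have := leg_natDegree k
    omega

lemma Jn_zzy {l k L : ℕ} (h : l + k < L) : Jn (fun t => zb l t * zb k t * yb L t) = 0 := by
  have : (fun t => zb l t * zb k t * yb L t) = fun t => (al l * al k * al L) *
      ((1 - Polynomial.X ^ 2) * (legendreP l).derivative * (legendreP k).derivative * legendreP L).eval (sin t) := by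
    funext t
    have hc : 1 - sin t ^ 2 = cos t ^ 2 := by rw [← sin_sq_add_cos_sq t]; ring
    simp [yb, zb, hc]; ring
  rw [this, Jn_const_mul, Jn_poly]
  by_cases hl : l = 0
  · subst hl; simp [leg_zero, polyI]
  by_cases hk : k = 0
  · subst hk; simp [leg_zero, polyI]
  rw [leg_orth_deg]
  · ring
  · refine lt_of_le_of_lt (Polynomial.natDegree_mul_le) ?_
    have h1 : ((1 - Polynomial.X ^ 2) * (legendreP l).derivative).natDegree ≤ 2 + (legendreP l).derivative.natDegree := by
      refine Polynomial.natDegree_mul_le.trans ?_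
      gcongr
      compute_degree
    have := leg_natDegree l
    have := leg_natDegree k
    have := (legendreP l).natDegree_derivative_le
    have := (legendreP k).natDegree_derivative_le
    omega

/-- Bessel's inequality. -/
lemma bessel {F : ℝ → ℝ} (hF : Continuous F) (S : Finset ℕ) :
    ∑ L ∈ S, Jn (fun t => F t * yb L t) ^ 2 ≤ Jn (fun t => F t ^ 2) := by
  set c : ℕ → ℝ := fun L => Jn (fun t => F t * yb L t) with hc
  have h0 : 0 ≤ Jn (fun t => (F t - ∑ L ∈ S, c L * yb L t) ^ 2) := Jn_nonneg fun t => sq_nonneg _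
  have e : (fun t => (F t - ∑ L ∈ S, c L * yb L t) ^ 2) = fun t =>
      (F t ^ 2 - ∑ L ∈ S, (2 * c L) * (F t * yb L t)) + ∑ L ∈ S, ∑ M ∈ S, (c L * c M) * (yb L t * yb M t) := by
    funext t
    have h1 : ∑ L ∈ S, ∑ M ∈ S, (c L * c M) * (yb L t * yb M t) = (∑ L ∈ S, c L * yb L t) ^ 2 := by
      rw [pow_two, Finset.sum_mul_sum]
      exact Finset.sum_congr rfl fun i _ => Finset.sum_congr rfl fun j _ => by ring
    have h2 : ∑ L ∈ S, (2 * c L) * (F t * yb L t) = 2 * F t * ∑ L ∈ S, c L * yb L t := by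
      rw [Finset.mul_sum]; exact Finset.sum_congr rfl fun i _ => by ring
    rw [h1, h2]; ring
  rw [e, Jn_add (by fun_prop) (by fun_prop), Jn_sub (by fun_prop) (by fun_prop),
    Jn_sum _ (by fun_prop), Jn_sum _ (by fun_prop)] at h0
  have e2 : ∑ L ∈ S, Jn (fun t => (2 * c L) * (F t * yb L t)) = 2 * ∑ L ∈ S, c L ^ 2 := by
    rw [Finset.mul_sum]; exact Finset.sum_congr rfl fun i _ => by rw [Jn_const_mul]; simp only [hc]; ring
  have e3 : ∑ L ∈ S, Jn (fun t => ∑ M ∈ S, (c L * c M) * (yb L t * yb M t)) = ∑ L ∈ S, c L ^ 2 := by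
    refine Finset.sum_congr rfl fun i hi => ?_
    rw [Jn_sum _ (by fun_prop)]
    simp only [Jn_const_mul, Jn_yy]
    simp [hi, pow_two]
  rw [e2, e3] at h0
  linarith

/-- A family of functions behaving like first derivatives of zonal harmonics. -/
structure GoodFam (e : ℕ → ℝ → ℝ) : Prop where
  cont : ∀ l, Continuous (e l)
  bound : ∀ l t, |e l t| ≤ ((l : ℝ) + 1) * al l
  orth : ∀ l k, l ≠ k → Jn (fun t => e l t * e k t) = 0
  norm : ∀ l, Jn (fun t => e l t * e l t) ≤ ((l : ℝ) + 1) ^ 2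
  triple : ∀ l k L, l + k < L → Jn (fun t => e l t * e k t * yb L t) = 0

lemma good_zb : GoodFam zb where
  cont := zb_cont
  bound := zb_abs_le
  orth l k h := by rw [Jn_zz, if_neg h]
  norm l := by rw [Jn_zz, if_pos rfl]; nlinarith [(Nat.cast_nonneg l : (0 : ℝ) ≤ l)]
  triple _ _ _ h := Jn_zzy h

lemma good_yb : GoodFam (fun l t => ((l : ℝ) + 1) * yb l t) where
  cont := fun l => by fun_prop
  bound l t := by
    rw [abs_mul, abs_of_nonneg (by positivity : (0 : ℝ) ≤ (l : ℝ) + 1)]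
    exact mul_le_mul_of_nonneg_left (yb_abs_le l t) (by positivity)
  orth l k h := by
    have : (fun t => ((l : ℝ) + 1) * yb l t * (((k : ℝ) + 1) * yb k t)) =
      fun t => (((l : ℝ) + 1) * ((k : ℝ) + 1)) * (yb l t * yb k t) := by funext t; ring
    rw [this, Jn_const_mul, Jn_yy, if_neg h, mul_zero]
  norm l := by
    have : (fun t => ((l : ℝ) + 1) * yb l t * (((l : ℝ) + 1) * yb l t)) =
      fun t => (((l : ℝ) + 1) * ((l : ℝ) + 1)) * (yb l t * yb l t) := by funext t; ring
    rw [this, Jn_const_mul, Jn_yy, if_pos rfl, mul_one, pow_two]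
  triple l k L h := by
    have : (fun t => ((l : ℝ) + 1) * yb l t * (((k : ℝ) + 1) * yb k t) * yb L t) =
      fun t => (((l : ℝ) + 1) * ((k : ℝ) + 1)) * (yb l t * yb k t * yb L t) := by funext t; ring
    rw [this, Jn_const_mul, Jn_yyy h, mul_zero]

/-! ### Series and the bilinear estimate -/

/-- A weighted summation-by-parts estimate. -/
lemma weight_sum {σ D : ℝ} (hσ : 0 < σ) (hD : 0 ≤ D) {c a : ℕ → ℝ} (hc : ∀ n, 0 ≤ c n) (ha : ∀ n, 0 ≤ a n)
    (hsa : Summable fun l : ℕ => ((l : ℝ) + 1) ^ σ * a l)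
    (h : ∀ N M : ℕ, ∑ L ∈ Finset.Ico N M, c L ≤ D * ∑' l : ℕ, (if N ≤ 2 * l then a l else 0)) :
    Summable (fun L : ℕ => ((L : ℝ) + 1) ^ σ * c L) ∧
    ∑' L : ℕ, ((L : ℝ) + 1) ^ σ * c L ≤ D * (2 ^ σ * ∑' l : ℕ, ((l : ℝ) + 1) ^ σ * a l) := by
  set w : ℕ → ℝ := fun N => ((N : ℝ) + 1) ^ σ - (N : ℝ) ^ σ with hw
  have hw0 : ∀ N, 0 ≤ w N := fun N => by
    simp only [hw, sub_nonneg]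
    exact Real.rpow_le_rpow (by positivity) (by linarith) hσ.le
  have hws : ∀ K : ℕ, ∑ N ∈ Finset.range K, w N = (K : ℝ) ^ σ := by
    intro K
    induction K with
    | zero => simp [Real.zero_rpow hσ.ne']
    | succ K ih => rw [Finset.sum_range_succ, ih]; simp [hw]
  have one_le : ∀ l : ℕ, (1 : ℝ) ≤ ((l : ℝ) + 1) ^ σ := fun l =>
    Real.one_le_rpow (by linarith [(Nat.cast_nonneg l : (0 : ℝ) ≤ l)]) hσ.le
  have hsa0 : Summable a := hsa.of_nonneg_of_le ha fun l => by
    nlinarith [one_le l, ha l]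
  have hsN : ∀ N : ℕ, Summable fun l : ℕ => (if N ≤ 2 * l then a l else 0) := fun N =>
    hsa0.of_nonneg_of_le (fun l => by split_ifs <;> simp [ha l]) (fun l => by split_ifs <;> simp [ha l])
  have part : ∀ M : ℕ, ∑ L ∈ Finset.range M, ((L : ℝ) + 1) ^ σ * c L ≤
      D * (2 ^ σ * ∑' l : ℕ, ((l : ℝ) + 1) ^ σ * a l) := by
    intro M
    have e1 : ∑ L ∈ Finset.range M, ((L : ℝ) + 1) ^ σ * c L =
        ∑ N ∈ Finset.range M, w N * ∑ L ∈ Finset.Ico N M, c L := by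
      have : ∀ L ∈ Finset.range M, ((L : ℝ) + 1) ^ σ * c L =
          ∑ N ∈ Finset.range (L + 1), w N * c L := by
        intro L _
        rw [← Finset.sum_mul, hws]; push_cast; rfl
      rw [Finset.sum_congr rfl this]
      simp only [Finset.mul_sum]
      apply Finset.sum_comm'
      intro x y
      simp only [Finset.mem_range, Finset.mem_Ico]
      omega
    rw [e1]
    calc ∑ N ∈ Finset.range M, w N * ∑ L ∈ Finset.Ico N M, c L
        ≤ ∑ N ∈ Finset.range M, w N * (D * ∑' l : ℕ, (if N ≤ 2 * l then a l else 0)) :=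
          Finset.sum_le_sum fun N _ => mul_le_mul_of_nonneg_left (h N M) (hw0 N)
      _ = D * ∑ N ∈ Finset.range M, ∑' l : ℕ, w N * (if N ≤ 2 * l then a l else 0) := by
          rw [Finset.mul_sum]
          refine Finset.sum_congr rfl fun N _ => ?_
          rw [tsum_mul_left]; ring
      _ = D * ∑' l : ℕ, ∑ N ∈ Finset.range M, w N * (if N ≤ 2 * l then a l else 0) := by
          rw [Summable.tsum_finsetSum]
          intro N _
          exact (hsN N).mul_left _
      _ ≤ D * ∑' l : ℕ, 2 ^ σ * (((l : ℝ) + 1) ^ σ * a l) := by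
          apply mul_le_mul_of_nonneg_left _ hD
          apply Summable.tsum_le_tsum _ _ (hsa.mul_left _)
          · intro l
            have : ∑ N ∈ Finset.range M, w N * (if N ≤ 2 * l then a l else 0) ≤
                ∑ N ∈ Finset.range (2 * l + 1), w N * a l := by
              have e : ∀ N, w N * (if N ≤ 2 * l then a l else 0) =
                (if N ≤ 2 * l then w N * a l else 0) := fun N => by split_ifs <;> simp
              simp only [e]
              rw [← Finset.sum_filter]
              apply Finset.sum_le_sum_of_subset_of_nonneg
              · intro N; simp only [Finset.mem_filter, Finset.mem_range]; omega
              · intro N _ _; exact mul_nonneg (hw0 N) (ha l)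
            refine this.trans ?_
            rw [← Finset.sum_mul, hws, ← mul_assoc, ← Real.mul_rpow (by norm_num) (by positivity)]
            apply mul_le_mul_of_nonneg_right _ (ha l)
            apply Real.rpow_le_rpow (by positivity) _ hσ.le
            push_cast; linarith
          · exact summable_sum fun N _ => (hsN N).mul_left _
      _ = _ := by rw [tsum_mul_left]
  have hnn : ∀ L : ℕ, 0 ≤ ((L : ℝ) + 1) ^ σ * c L := fun L => mul_nonneg (by positivity) (hc L)
  exact ⟨summable_of_sum_range_le hnn part, Real.tsum_le_of_sum_range_le hnn part⟩

/-- Admissible coefficient sequences. -/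
def Adm (a : ℕ → ℝ) : Prop := Summable fun l : ℕ => |a l| * (((l : ℝ) + 1) * al l)

/-- The series attached to a family. -/
def ser (e : ℕ → ℝ → ℝ) (a : ℕ → ℝ) (t : ℝ) : ℝ := ∑' l : ℕ, a l * e l t

/-- Its partial sums. -/
def serP (e : ℕ → ℝ → ℝ) (a : ℕ → ℝ) (m : ℕ) (t : ℝ) : ℝ := ∑ l ∈ Finset.range m, a l * e l t

/-- The sum of the bounds. -/
def bnd (a : ℕ → ℝ) : ℝ := ∑' l : ℕ, |a l| * (((l : ℝ) + 1) * al l)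

lemma bnd_nonneg (a : ℕ → ℝ) : 0 ≤ bnd a :=
  tsum_nonneg fun l => mul_nonneg (abs_nonneg _) (mul_nonneg (by positivity) (al_pos l).le)


lemma term_le {e : ℕ → ℝ → ℝ} (he : ∀ l t, |e l t| ≤ ((l : ℝ) + 1) * al l) {a : ℕ → ℝ}
    (l : ℕ) (t : ℝ) : |a l * e l t| ≤ |a l| * (((l : ℝ) + 1) * al l) := by
  rw [abs_mul]; exact mul_le_mul_of_nonneg_left (he l t) (abs_nonneg _)

lemma ser_summable {e : ℕ → ℝ → ℝ} (he : ∀ l t, |e l t| ≤ ((l : ℝ) + 1) * al l) {a : ℕ → ℝ}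
    (ha : Adm a) (t : ℝ) : Summable fun l => a l * e l t :=
  Summable.of_norm_bounded ha fun l => term_le he l t

lemma ser_tendsto {e : ℕ → ℝ → ℝ} (he : ∀ l t, |e l t| ≤ ((l : ℝ) + 1) * al l) {a : ℕ → ℝ}
    (ha : Adm a) (t : ℝ) : Tendsto (fun m => serP e a m t) atTop (nhds (ser e a t)) :=
  (ser_summable he ha t).hasSum.tendsto_sum_nat

lemma serP_le {e : ℕ → ℝ → ℝ} (he : ∀ l t, |e l t| ≤ ((l : ℝ) + 1) * al l) {a : ℕ → ℝ}
    (ha : Adm a) (m : ℕ) (t : ℝ) : |serP e a m t| ≤ bnd a := by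
  refine (Finset.abs_sum_le_sum_abs _ _).trans ?_
  refine (Finset.sum_le_sum fun l _ => term_le he l t).trans ?_
  exact ha.sum_le_tsum _ fun l _ => mul_nonneg (abs_nonneg _) (mul_nonneg (by positivity) (al_pos l).le)

lemma ser_le {e : ℕ → ℝ → ℝ} (he : ∀ l t, |e l t| ≤ ((l : ℝ) + 1) * al l) {a : ℕ → ℝ}
    (ha : Adm a) (t : ℝ) : |ser e a t| ≤ bnd a :=
  le_of_tendsto (ser_tendsto he ha t).abs (Eventually.of_forall fun m => serP_le he ha m t)

lemma ser_cont {e : ℕ → ℝ → ℝ} (he : ∀ l t, |e l t| ≤ ((l : ℝ) + 1) * al l) {a : ℕ → ℝ}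
    (hc : ∀ l, Continuous (e l)) (ha : Adm a) : Continuous (ser e a) := by
  apply continuous_tsum (fun l => continuous_const.mul (hc l)) ha
  exact fun l t => term_le he l t

lemma serP_cont {e : ℕ → ℝ → ℝ} (hc : ∀ l, Continuous (e l)) (a : ℕ → ℝ) (m : ℕ) :
    Continuous (serP e a m) := by
  unfold serP; exact continuous_finsetSum _ fun l _ => continuous_const.mul (hc l)

lemma tail_norm {e : ℕ → ℝ → ℝ} (he : GoodFam e) {a : ℕ → ℝ} (ha : Adm a)
    (hs : Summable fun l : ℕ => ((l : ℝ) + 1) ^ 2 * a l ^ 2) (m : ℕ) :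
    Jn (fun t => (ser e a t - serP e a m t) ^ 2) ≤
      ∑' l : ℕ, if m ≤ l then ((l : ℝ) + 1) ^ 2 * a l ^ 2 else 0 := by
  have hlim : Tendsto (fun M => Jn (fun t => (serP e a M t - serP e a m t) ^ 2)) atTop
      (nhds (Jn (fun t => (ser e a t - serP e a m t) ^ 2))) := by
    apply Jn_tendsto (C := (bnd a + bnd a) ^ 2)
    · intro M; exact ((serP_cont he.cont a M).sub (serP_cont he.cont a m)).pow 2
    · intro M t
      rw [abs_pow]
      gcongr
      exact (abs_sub _ _).trans (add_le_add (serP_le he.bound ha M t) (serP_le he.bound ha m t))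
    · intro t
      exact ((ser_tendsto he.bound ha t).sub_const _).pow 2
  apply le_of_tendsto hlim
  filter_upwards [eventually_ge_atTop m] with M hM
  have e1 : (fun t => (serP e a M t - serP e a m t) ^ 2) = fun t =>
      ∑ l ∈ Finset.Ico m M, ∑ k ∈ Finset.Ico m M, (a l * a k) * (e l t * e k t) := by
    funext t
    rw [serP, serP, ← Finset.sum_Ico_eq_sub _ hM, pow_two, Finset.sum_mul_sum]
    exact Finset.sum_congr rfl fun i _ => Finset.sum_congr rfl fun j _ => by ring
  have hcont := he.cont
  rw [e1, Jn_sum _ (by fun_prop)]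
  have e2 : ∀ l ∈ Finset.Ico m M, Jn (fun t => ∑ k ∈ Finset.Ico m M, (a l * a k) * (e l t * e k t)) ≤
      if m ≤ l then ((l : ℝ) + 1) ^ 2 * a l ^ 2 else 0 := by
    intro l hl
    rw [if_pos (Finset.mem_Ico.mp hl).1, Jn_sum _ (by fun_prop), Finset.sum_eq_single_of_mem l hl]
    · rw [Jn_const_mul]
      nlinarith [he.norm l, mul_self_nonneg (a l)]
    · intro k _ hk
      rw [Jn_const_mul, he.orth l k (Ne.symm hk), mul_zero]
  refine (Finset.sum_le_sum e2).trans ?_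
  apply Summable.sum_le_tsum
  · intro l _; split_ifs <;> positivity
  · refine hs.of_nonneg_of_le (fun l => ?_) (fun l => ?_)
    · split_ifs <;> positivity
    · split_ifs
      · exact le_rfl
      · positivity

/-- Coefficients of products, high-frequency part. -/
lemma prod_tail {e : ℕ → ℝ → ℝ} (he : GoodFam e) {a b : ℕ → ℝ} (ha : Adm a) (hb : Adm b)
    (hsa : Summable fun l : ℕ => ((l : ℝ) + 1) ^ 2 * a l ^ 2)
    (hsb : Summable fun l : ℕ => ((l : ℝ) + 1) ^ 2 * b l ^ 2) (N M : ℕ) :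
    ∑ L ∈ Finset.Ico N M, Jn (fun t => ser e a t * ser e b t * yb L t) ^ 2 ≤
      2 * ∑' l : ℕ, (if N ≤ 2 * l then
        (bnd b ^ 2 * (((l : ℝ) + 1) ^ 2 * a l ^ 2) + bnd a ^ 2 * (((l : ℝ) + 1) ^ 2 * b l ^ 2)) else 0) := by
  set m := (N + 1) / 2 with hm
  have hmN : ∀ l, m ≤ l ↔ N ≤ 2 * l := fun l => by omega
  have hcont := he.cont
  have ca : Continuous (ser e a) := ser_cont he.bound he.cont ha
  have cb : Continuous (ser e b) := ser_cont he.bound he.cont hb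
  have cam : Continuous (serP e a m) := serP_cont he.cont a m
  have cbm : Continuous (serP e b m) := serP_cont he.cont b m
  set G : ℝ → ℝ := fun t => (ser e a t - serP e a m t) * ser e b t +
    serP e a m t * (ser e b t - serP e b m t) with hG
  have cG : Continuous G := by simp only [hG]; fun_prop
  have low : ∀ L ∈ Finset.Ico N M, Jn (fun t => serP e a m t * serP e b m t * yb L t) = 0 := by
    intro L hL
    have e1 : (fun t => serP e a m t * serP e b m t * yb L t) = fun t =>
        ∑ l ∈ Finset.range m, ∑ k ∈ Finset.range m, (a l * b k) * (e l t * e k t * yb L t) := by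
      funext t
      rw [serP, serP, Finset.sum_mul_sum, Finset.sum_mul]
      refine Finset.sum_congr rfl fun i _ => ?_
      rw [Finset.sum_mul]
      exact Finset.sum_congr rfl fun j _ => by ring
    rw [e1, Jn_sum _ (by fun_prop)]
    apply Finset.sum_eq_zero
    intro l hl
    rw [Jn_sum _ (by fun_prop)]
    apply Finset.sum_eq_zero
    intro k hk
    rw [Jn_const_mul, he.triple l k L, mul_zero]
    simp only [Finset.mem_range, Finset.mem_Ico] at hl hk hL
    omega
  have coef : ∀ L ∈ Finset.Ico N M, Jn (fun t => ser e a t * ser e b t * yb L t) = Jn (fun t => G t * yb L t) := by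
    intro L hL
    have e1 : (fun t => ser e a t * ser e b t * yb L t) = fun t =>
      G t * yb L t + serP e a m t * serP e b m t * yb L t := by funext t; simp only [hG]; ring
    rw [e1, Jn_add (by fun_prop) (by fun_prop), low L hL, add_zero]
  rw [Finset.sum_congr rfl fun L hL => by rw [coef L hL]]
  refine (bessel cG _).trans ?_
  have pt : ∀ t, G t ^ 2 ≤ (2 * bnd b ^ 2) * (ser e a t - serP e a m t) ^ 2 +
      (2 * bnd a ^ 2) * (ser e b t - serP e b m t) ^ 2 := by
    intro t
    have h1 : ser e b t ^ 2 ≤ bnd b ^ 2 := by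
      rw [← sq_abs]; exact pow_le_pow_left₀ (abs_nonneg _) (ser_le he.bound hb t) 2
    have h2 : serP e a m t ^ 2 ≤ bnd a ^ 2 := by
      rw [← sq_abs]; exact pow_le_pow_left₀ (abs_nonneg _) (serP_le he.bound ha m t) 2
    have h3 : G t ^ 2 ≤ 2 * ((ser e a t - serP e a m t) * ser e b t) ^ 2 +
      2 * (serP e a m t * (ser e b t - serP e b m t)) ^ 2 := by
      simp only [hG]
      nlinarith [sq_nonneg ((ser e a t - serP e a m t) * ser e b t - serP e a m t * (ser e b t - serP e b m t))]
    rw [mul_pow, mul_pow] at h3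
    nlinarith [mul_le_mul_of_nonneg_left h1 (sq_nonneg (ser e a t - serP e a m t)),
      mul_le_mul_of_nonneg_left h2 (sq_nonneg (ser e b t - serP e b m t))]
  refine (Jn_mono (by fun_prop) (by fun_prop) pt).trans ?_
  rw [Jn_add (by fun_prop) (by fun_prop), Jn_const_mul, Jn_const_mul]
  have ta := tail_norm he ha hsa m
  have tb := tail_norm he hb hsb m
  simp only [hmN] at ta tb
  have sa' : Summable fun l : ℕ => if N ≤ 2 * l then ((l : ℝ) + 1) ^ 2 * a l ^ 2 else 0 :=
    hsa.of_nonneg_of_le (fun l => by split_ifs <;> positivity) (fun l => by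
      split_ifs
      · exact le_rfl
      · positivity)
  have sb' : Summable fun l : ℕ => if N ≤ 2 * l then ((l : ℝ) + 1) ^ 2 * b l ^ 2 else 0 :=
    hsb.of_nonneg_of_le (fun l => by split_ifs <;> positivity) (fun l => by
      split_ifs
      · exact le_rfl
      · positivity)
  have split : ∑' l : ℕ, (if N ≤ 2 * l then
        (bnd b ^ 2 * (((l : ℝ) + 1) ^ 2 * a l ^ 2) + bnd a ^ 2 * (((l : ℝ) + 1) ^ 2 * b l ^ 2)) else 0) =
      bnd b ^ 2 * (∑' l : ℕ, if N ≤ 2 * l then ((l : ℝ) + 1) ^ 2 * a l ^ 2 else 0) +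
      bnd a ^ 2 * (∑' l : ℕ, if N ≤ 2 * l then ((l : ℝ) + 1) ^ 2 * b l ^ 2 else 0) := by
    rw [← tsum_mul_left, ← tsum_mul_left, ← Summable.tsum_add (sa'.mul_left _) (sb'.mul_left _)]
    refine tsum_congr fun l => ?_
    split_ifs <;> simp
  rw [split]
  nlinarith [mul_le_mul_of_nonneg_left ta (sq_nonneg (bnd b)), mul_le_mul_of_nonneg_left tb (sq_nonneg (bnd a))]

/-- Weighted square norm of a coefficient sequence. -/
def nrm2 (σ : ℝ) (a : ℕ → ℝ) : ℝ := ∑' l : ℕ, ((l : ℝ) + 1) ^ (2 * σ) * a l ^ 2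

/-- Summability of the weighted squares. -/
def Sm (σ : ℝ) (a : ℕ → ℝ) : Prop := Summable fun l : ℕ => ((l : ℝ) + 1) ^ (2 * σ) * a l ^ 2

lemma nrm2_nonneg (σ : ℝ) (a : ℕ → ℝ) : 0 ≤ nrm2 σ a := tsum_nonneg fun l => by positivity

lemma rpow_split (s : ℝ) (l : ℕ) : ((l : ℝ) + 1) ^ (2 * (s + 1)) = ((l : ℝ) + 1) ^ (2 * s) * ((l : ℝ) + 1) ^ 2 := by
  rw [← Real.rpow_natCast, ← Real.rpow_add (by positivity)]; congr 1; push_cast; ring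

lemma bilinear_fam {e : ℕ → ℝ → ℝ} (he : GoodFam e) {s : ℝ} (hs : 0 < s) {a b : ℕ → ℝ} (ha : Adm a) (hb : Adm b)
    (sa : Sm (s + 1) a) (sb : Sm (s + 1) b) :
    Sm s (fun L => Jn (fun t => ser e a t * ser e b t * yb L t)) ∧
    nrm2 s (fun L => Jn (fun t => ser e a t * ser e b t * yb L t)) ≤
      2 * (2 ^ (2 * s) * (bnd b ^ 2 * nrm2 (s + 1) a + bnd a ^ 2 * nrm2 (s + 1) b)) := by
  have one_le : ∀ l : ℕ, (1 : ℝ) ≤ ((l : ℝ) + 1) ^ (2 * s) := fun l =>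
    Real.one_le_rpow (by linarith [(Nat.cast_nonneg l : (0 : ℝ) ≤ l)]) (by positivity)
  have low : ∀ {a : ℕ → ℝ}, Sm (s + 1) a → Summable fun l : ℕ => ((l : ℝ) + 1) ^ 2 * a l ^ 2 := by
    intro a h
    refine Summable.of_nonneg_of_le (fun l => by positivity) (fun l => ?_) h
    rw [rpow_split, mul_assoc]
    exact le_mul_of_one_le_left (by positivity) (one_le l)
  have E : ∀ l : ℕ, ((l : ℝ) + 1) ^ (2 * s) * (bnd b ^ 2 * (((l : ℝ) + 1) ^ 2 * a l ^ 2) +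
      bnd a ^ 2 * (((l : ℝ) + 1) ^ 2 * b l ^ 2)) = bnd b ^ 2 * (((l : ℝ) + 1) ^ (2 * (s + 1)) * a l ^ 2) +
      bnd a ^ 2 * (((l : ℝ) + 1) ^ (2 * (s + 1)) * b l ^ 2) := fun l => by rw [rpow_split]; ring
  have key := weight_sum (σ := 2 * s) (D := 2) (by positivity) (by norm_num)
    (c := fun L => Jn (fun t => ser e a t * ser e b t * yb L t) ^ 2)
    (a := fun l => bnd b ^ 2 * (((l : ℝ) + 1) ^ 2 * a l ^ 2) + bnd a ^ 2 * (((l : ℝ) + 1) ^ 2 * b l ^ 2))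
    (fun _ => sq_nonneg _) (fun l => by positivity)
    (by simp only [E]; exact (sa.mul_left _).add (sb.mul_left _))
    (fun N M => prod_tail he ha hb (low sa) (low sb) N M)
  refine ⟨key.1, key.2.trans (le_of_eq ?_)⟩
  congr 2
  simp only [E]
  rw [Summable.tsum_add (sa.mul_left _) (sb.mul_left _), tsum_mul_left, tsum_mul_left]; rfl

/-- The constant in the sup bound. -/
def Kc (s : ℝ) : ℝ := ∑' l : ℕ, ((l : ℝ) + 1) ^ (1 - 2 * s)

lemma Kc_summable {s : ℝ} (hs : 1 < s) : Summable fun l : ℕ => ((l : ℝ) + 1) ^ (1 - 2 * s) := by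
  have h := (summable_nat_add_iff 1).mpr (Real.summable_nat_rpow.mpr (show 1 - 2 * s < -1 by linarith))
  simpa using h

lemma adm_of_Sm {s : ℝ} (hs : 1 < s) {a : ℕ → ℝ} (h : Sm (s + 1) a) :
    Adm a ∧ bnd a ^ 2 ≤ Kc s * nrm2 (s + 1) a := by
  set f : ℕ → ℝ := fun l => ((l : ℝ) + 1) ^ (s + 1) * |a l| with hf
  set g : ℕ → ℝ := fun l => ((l : ℝ) + 1) ^ (-s) * al l with hg
  have pos : ∀ l : ℕ, (0 : ℝ) < (l : ℝ) + 1 := fun l => by positivity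
  have f2 : ∀ l, f l ^ (2 : ℝ) = ((l : ℝ) + 1) ^ (2 * (s + 1)) * a l ^ 2 := by
    intro l
    rw [Real.rpow_two, hf]; simp only
    rw [mul_pow, sq_abs, ← Real.rpow_natCast, ← Real.rpow_mul (pos l).le]; congr 2; push_cast; ring
  have g2 : ∀ l, g l ^ (2 : ℝ) ≤ ((l : ℝ) + 1) ^ (1 - 2 * s) := by
    intro l
    rw [Real.rpow_two, hg]; simp only
    have : ((l : ℝ) + 1) ^ (1 - 2 * s) = (((l : ℝ) + 1) ^ (-s)) ^ 2 * ((l : ℝ) + 1) := by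
      rw [← Real.rpow_natCast, ← Real.rpow_mul (pos l).le, ← Real.rpow_add_one (pos l).ne']
      congr 1; push_cast; ring
    rw [mul_pow, this]
    exact mul_le_mul_of_nonneg_left (al_sq_le l) (by positivity)
  have sg : Summable fun l => g l ^ (2 : ℝ) :=
    (Kc_summable hs).of_nonneg_of_le (fun l => by rw [Real.rpow_two]; positivity) g2
  have sf : Summable fun l => f l ^ (2 : ℝ) := by simp only [f2]; exact h
  have hfg : ∀ l, f l * g l = |a l| * (((l : ℝ) + 1) * al l) := by
    intro l
    simp only [hf, hg]
    have : ((l : ℝ) + 1) ^ (s + 1) * ((l : ℝ) + 1) ^ (-s) = (l : ℝ) + 1 := by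
      rw [← Real.rpow_add (pos l)]; simp
    linear_combination (|a l| * al l) * this
  have H := Real.summable_and_inner_le_Lp_mul_Lq_tsum_of_nonneg (f := f) (g := g) (p := 2) (q := 2)
    (Real.HolderConjugate.two_two) (fun l => by positivity)
    (fun l => mul_nonneg (by positivity) (al_pos l).le) sf sg
  simp only [hfg] at H
  refine ⟨H.1, ?_⟩
  have nb := bnd_nonneg a
  have H2 := pow_le_pow_left₀ nb H.2 2
  refine H2.trans ?_
  have sq : ∀ x : ℝ, 0 ≤ x → (x ^ (1 / (2 : ℝ))) ^ 2 = x := fun x hx => by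
    rw [← Real.sqrt_eq_rpow, Real.sq_sqrt hx]
  rw [mul_pow, sq _ (tsum_nonneg fun l => by rw [Real.rpow_two]; positivity),
    sq _ (tsum_nonneg fun l => by rw [Real.rpow_two]; positivity), mul_comm]
  simp only [f2]
  exact mul_le_mul_of_nonneg_right (sg.tsum_le_tsum g2 (Kc_summable hs)) (nrm2_nonneg _ _)

/-! ### Solid harmonics and the maximum principle -/

/-- Three-dimensional Euclidean space. -/
abbrev E3 := EuclideanSpace ℝ (Fin 3)

/-- The functions `r^{-n} Q(z/r)`. -/
def solid (n : ℕ) (Q : Polynomial ℝ) (y : E3) : ℝ := (‖y‖⁻¹) ^ n * Q.eval (y 2 * ‖y‖⁻¹)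

lemma hasFDerivAt_rho {y : E3} (hy : y ≠ 0) :
    HasFDerivAt (fun y : E3 => ‖y‖⁻¹) (-((‖y‖⁻¹) ^ 3) • innerSL ℝ y) y := by
  have h1 : HasFDerivAt (fun y : E3 => ‖y‖ ^ 2) (2 • innerSL ℝ y) y := (hasStrictFDerivAt_norm_sq y).hasFDerivAt
  have hn : ‖y‖ ≠ 0 := norm_ne_zero_iff.mpr hy
  have h2 := (hasDerivAt_inv (by rw [Real.sqrt_sq (norm_nonneg _)]; exact hn)).comp_hasFDerivAt y (h1.sqrt (by positivity))
  simp only [Function.comp_def, Real.sqrt_sq (norm_nonneg _)] at h2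
  refine h2.congr_fderiv ?_
  ext v
  simp
  field_simp

lemma hasFDerivAt_solid (n : ℕ) (Q : Polynomial ℝ) {y : E3} (hy : y ≠ 0) :
    HasFDerivAt (solid n Q)
      (-(solid (n + 2) (Polynomial.C (n : ℝ) * Q + Polynomial.X * Q.derivative) y) • innerSL ℝ y +
        solid (n + 1) Q.derivative y • (EuclideanSpace.proj (2 : Fin 3) : E3 →L[ℝ] ℝ)) y := by
  have hr := hasFDerivAt_rho hy
  have hz : HasFDerivAt (fun y : E3 => y 2) (EuclideanSpace.proj (2 : Fin 3) : E3 →L[ℝ] ℝ) y :=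
    (EuclideanSpace.proj (2 : Fin 3) : E3 →L[ℝ] ℝ).hasFDerivAt
  have hx := hz.fun_mul hr
  have hQ := (Q.hasDerivAt (y 2 * ‖y‖⁻¹)).comp_hasFDerivAt y hx
  have h := ((hasDerivAt_pow n (‖y‖⁻¹)).comp_hasFDerivAt y hr).fun_mul hQ
  refine h.congr_fderiv ?_
  ext v
  simp [solid]
  rcases n with _ | n
  · simp; ring
  · simp; ring

lemma innerSL_single (y : E3) (i : Fin 3) : innerSL ℝ y (EuclideanSpace.single i 1) = y i := by
  simp [EuclideanSpace.inner_single_right]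

lemma fderiv_solid (n : ℕ) (Q : Polynomial ℝ) {y : E3} (hy : y ≠ 0) (i : Fin 3) :
    fderiv ℝ (solid n Q) y (EuclideanSpace.single i 1) =
      -(solid (n + 2) (Polynomial.C (n : ℝ) * Q + Polynomial.X * Q.derivative) y) * y i +
        solid (n + 1) Q.derivative y * (if i = 2 then 1 else 0) := by
  rw [(hasFDerivAt_solid n Q hy).fderiv]
  simp only [add_apply, smul_apply, innerSL_single, smul_eq_mul]
  congr 2
  simp [Pi.single_apply, eq_comm]

lemma lap_solid (n : ℕ) (Q : Polynomial ℝ) {y : E3} (hy : y ≠ 0) :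
    lap (solid n Q) y = solid (n + 2) ((1 - Polynomial.X ^ 2) * Q.derivative.derivative
      - 2 * Polynomial.X * Q.derivative + Polynomial.C ((n : ℝ) * (n - 1)) * Q) y := by
  have key : ∀ i : Fin 3, fderiv ℝ (fun y => fderiv ℝ (solid n Q) y (EuclideanSpace.single i 1)) y
    (EuclideanSpace.single i 1) =
      -(fderiv ℝ (solid (n + 2) (Polynomial.C (n : ℝ) * Q + Polynomial.X * Q.derivative)) y (EuclideanSpace.single i 1) * y i
       + solid (n + 2) (Polynomial.C (n : ℝ) * Q + Polynomial.X * Q.derivative) y)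
      + fderiv ℝ (solid (n + 1) Q.derivative) y (EuclideanSpace.single i 1) * (if i = 2 then 1 else 0) := by
    intro i
    have hev : (fun y => fderiv ℝ (solid n Q) y (EuclideanSpace.single i 1)) =ᶠ[nhds y] fun y =>
      -(solid (n + 2) (Polynomial.C (n : ℝ) * Q + Polynomial.X * Q.derivative) y) * y i +
        solid (n + 1) Q.derivative y * (if i = 2 then 1 else 0) := by
      filter_upwards [isOpen_ne.mem_nhds hy] with z hz using fderiv_solid n Q hz i
    rw [hev.fderiv_eq]
    have hz : HasFDerivAt (fun y : E3 => y i) (EuclideanSpace.proj (i : Fin 3) : E3 →L[ℝ] ℝ) y :=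
      (EuclideanSpace.proj (i : Fin 3) : E3 →L[ℝ] ℝ).hasFDerivAt
    have h1 := (hasFDerivAt_solid (n + 2) (Polynomial.C (n : ℝ) * Q + Polynomial.X * Q.derivative) hy).differentiableAt.hasFDerivAt
    have h2 := (hasFDerivAt_solid (n + 1) Q.derivative hy).differentiableAt.hasFDerivAt
    have h3 := (h1.fun_neg.fun_mul hz).fun_add (h2.mul_const (if i = 2 then (1 : ℝ) else 0))
    rw [h3.fderiv]
    simp
    split_ifs <;> simp <;> ring
  unfold lap
  simp only [key, Fin.sum_univ_three, fderiv_solid _ _ hy]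
  have hn : ‖y‖ ≠ 0 := norm_ne_zero_iff.mpr hy
  have hsq : y 0 ^ 2 + y 1 ^ 2 + y 2 ^ 2 = ‖y‖ ^ 2 := by
    rw [EuclideanSpace.real_norm_sq_eq, Fin.sum_univ_three]
  have hsq' : (y 0 ^ 2 + y 1 ^ 2 + y 2 ^ 2) * ‖y‖⁻¹ ^ 2 = 1 := by rw [hsq]; field_simp
  simp [solid]
  simp only [← inv_pow] at *
  generalize ‖y‖⁻¹ = ρ at *
  linear_combination (ρ ^ (n + 2) * (((n : ℝ) + 2) * (n * Q.eval (y 2 * ρ) + (y 2 * ρ) * Q.derivative.eval (y 2 * ρ)) +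
    (y 2 * ρ) * (n * Q.derivative.eval (y 2 * ρ) + Q.derivative.eval (y 2 * ρ) +
      (y 2 * ρ) * Q.derivative.derivative.eval (y 2 * ρ)))) * hsq'

lemma lap_solid_leg (l : ℕ) {y : E3} (hy : y ≠ 0) : lap (solid (l + 1) (legendreP l)) y = 0 := by
  rw [lap_solid _ _ hy]
  have : (1 - Polynomial.X ^ 2) * (legendreP l).derivative.derivative
      - 2 * Polynomial.X * (legendreP l).derivative +
      Polynomial.C ((((l + 1 : ℕ) : ℝ)) * (((l + 1 : ℕ) : ℝ) - 1)) * (legendreP l) = 0 := by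
    have h := leg_ode l
    have e : Polynomial.C ((((l + 1 : ℕ) : ℝ)) * (((l + 1 : ℕ) : ℝ) - 1)) = ((l : Polynomial ℝ) * (l + 1)) := by
      simp; ring
    rw [e]
    linear_combination -h
  rw [this]; simp [solid]

lemma poly_contDiff (Q : Polynomial ℝ) : ContDiff ℝ 2 (fun x => Q.eval x) := by
  simpa using Polynomial.contDiff_aeval (R := ℝ) (𝕜 := ℝ) Q 2

lemma contDiffAt_solid (n : ℕ) (Q : Polynomial ℝ) {y : E3} (hy : y ≠ 0) : ContDiffAt ℝ 2 (solid n Q) y := by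
  have h1 : ContDiffAt ℝ 2 (fun y : E3 => ‖y‖⁻¹) y :=
    (contDiffAt_id.norm ℝ hy).inv (norm_ne_zero_iff.mpr hy)
  have h2 : ContDiffAt ℝ 2 (fun y : E3 => y 2) y :=
    (EuclideanSpace.proj (2 : Fin 3) : E3 →L[ℝ] ℝ).contDiff.contDiffAt
  exact (h1.pow n).mul ((poly_contDiff Q).contDiffAt.comp y (h2.mul h1))

lemma diff_partial {u : E3 → ℝ} {x : E3} (hu : ContDiffAt ℝ 2 u x) (e : E3) :
    DifferentiableAt ℝ (fun y => fderiv ℝ u y e) x := by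
  have h : ContDiffAt ℝ 1 (fderiv ℝ u) x := hu.fderiv_right (by norm_num)
  exact (h.differentiableAt (by norm_num)).clm_apply (differentiableAt_const e)

lemma ev_diff {u : E3 → ℝ} {x : E3} (hu : ContDiffAt ℝ 2 u x) : ∀ᶠ y in nhds x, DifferentiableAt ℝ u y := by
  filter_upwards [hu.eventually (by simp)] with y hy using hy.differentiableAt (by norm_num)

lemma lap_add_smul {u v : E3 → ℝ} {x : E3} (hu : ContDiffAt ℝ 2 u x) (hv : ContDiffAt ℝ 2 v x) (c : ℝ) :
    lap (fun y => u y + c * v y) x = lap u x + c * lap v x := by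
  unfold lap
  rw [Finset.mul_sum, ← Finset.sum_add_distrib]
  refine Finset.sum_congr rfl fun i _ => ?_
  have hev : (fun y => fderiv ℝ (fun y => u y + c * v y) y (EuclideanSpace.single i 1)) =ᶠ[nhds x]
      fun y => fderiv ℝ u y (EuclideanSpace.single i 1) + c * fderiv ℝ v y (EuclideanSpace.single i 1) := by
    filter_upwards [ev_diff hu, ev_diff hv] with y h1 h2
    rw [(h1.hasFDerivAt.fun_add (h2.hasFDerivAt.const_mul c)).fderiv]
    simp
  rw [hev.fderiv_eq, ((diff_partial hu _).hasFDerivAt.fun_add ((diff_partial hv _).hasFDerivAt.const_mul c)).fderiv]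
  simp

lemma lap_normSq (x : E3) : lap (fun y : E3 => ‖y‖ ^ 2) x = 6 := by
  have h : ∀ i : Fin 3, (fun y : E3 => fderiv ℝ (fun y : E3 => ‖y‖ ^ 2) y (EuclideanSpace.single i 1)) =
      fun y : E3 => 2 * y i := by
    intro i; funext y
    rw [(hasStrictFDerivAt_norm_sq y).hasFDerivAt.fderiv]
    have := innerSL_single y i
    simp only [smul_apply, this]; simp
  have h2 : ∀ i : Fin 3, fderiv ℝ (fun y : E3 => 2 * y i) x (EuclideanSpace.single i 1) = 2 := by
    intro i
    have hz : HasFDerivAt (fun y : E3 => y i) (EuclideanSpace.proj (i : Fin 3) : E3 →L[ℝ] ℝ) x :=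
      (EuclideanSpace.proj (i : Fin 3) : E3 →L[ℝ] ℝ).hasFDerivAt
    rw [(hz.const_mul 2).fderiv]; simp
  unfold lap
  simp only [h, h2]; simp; norm_num

/-- Second derivative test. -/
lemma second_deriv_le {g : E3 → ℝ} {x : E3} (hg : ContDiffAt ℝ 2 g x) (hm : IsLocalMax g x) (e : E3) :
    fderiv ℝ (fun y => fderiv ℝ g y e) x e ≤ 0 := by
  by_contra! hpos
  set L : ℝ → E3 := fun t => x + t • e with hL
  have hL0 : L 0 = x := by simp [hL]
  have hLd : ∀ t, HasDerivAt L e t := fun t => by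
    have h := ((hasDerivAt_id t).smul_const e).const_add x
    rw [one_smul] at h
    exact h
  have hLc : Tendsto L (nhds 0) (nhds x) := by
    have := (hLd 0).continuousAt.tendsto; rwa [hL0] at this
  have h1 : ∀ᶠ t in nhds (0 : ℝ), HasDerivAt (fun t => g (L t)) (fderiv ℝ g (L t) e) t := by
    filter_upwards [hLc.eventually (ev_diff hg)] with t ht
    exact ht.hasFDerivAt.comp_hasDerivAt t (hLd t)
  have hd1 : deriv (fun t => g (L t)) =ᶠ[nhds 0] fun t => fderiv ℝ g (L t) e := by
    filter_upwards [h1] with t ht using ht.deriv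
  have hd2 : HasDerivAt (fun t => fderiv ℝ g (L t) e) (fderiv ℝ (fun y => fderiv ℝ g y e) x e) 0 := by
    have := (diff_partial hg e).hasFDerivAt
    rw [← hL0] at this
    have h := this.comp_hasDerivAt (0 : ℝ) (hLd 0)
    rw [hL0] at h; exact h
  have hdd : deriv (deriv (fun t => g (L t))) 0 = fderiv ℝ (fun y => fderiv ℝ g y e) x e := by
    rw [hd1.deriv_eq, hd2.deriv]
  have hmax : IsLocalMax (fun t => g (L t)) 0 := by
    have : ∀ᶠ t in nhds (0 : ℝ), g (L t) ≤ g x := hLc.eventually hm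
    simpa [IsLocalMax, IsMaxFilter, hL0] using this
  have hmin := isLocalMin_of_deriv_deriv_pos (by rw [hdd]; exact hpos) hmax.deriv_eq_zero
    h1.self_of_nhds.continuousAt
  have hconst : (fun t => g (L t)) =ᶠ[nhds 0] fun _ => g (L 0) := by
    filter_upwards [hmax, hmin] with t h1 h2 using le_antisymm h1 h2
  have : deriv (deriv (fun t => g (L t))) 0 = 0 := by
    rw [hconst.deriv.deriv_eq]; simp
  rw [hdd] at this; linarith

lemma isOpen_ext : IsOpen extDomain := isOpen_lt continuous_const continuous_norm

/-- The maximum principle in the exterior domain. -/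
lemma max_principle {w : E3 → ℝ} (h2 : ContDiffOn ℝ 2 w extDomain) (hl : ∀ x ∈ extDomain, lap w x = 0)
    (hc : ContinuousOn w closedExt) (h0 : Tendsto w (Bornology.cobounded _) (nhds 0)) {M : ℝ} (hM : 0 ≤ M)
    (hb : ∀ x, ‖x‖ = 1 → w x ≤ M) : ∀ x ∈ closedExt, w x ≤ M := by
  intro x0 hx0
  by_contra! hlt
  set δ := w x0 - M with hδ
  have hδ0 : 0 < δ := by linarith
  have hev : ∀ᶠ x in Bornology.cobounded E3, w x < δ / 2 := h0.eventually (gt_mem_nhds (by linarith))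
  rw [← comap_norm_atTop, eventually_comap] at hev
  obtain ⟨R0, hR0⟩ := eventually_atTop.mp hev
  set R := max (max R0 (‖x0‖ + 1)) 2 with hR
  have hRR : R0 ≤ R := (le_max_left _ _).trans (le_max_left _ _)
  have hRx : ‖x0‖ + 1 ≤ R := (le_max_right _ _).trans (le_max_left _ _)
  have hR2 : 2 ≤ R := le_max_right _ _
  set ε := δ / (4 * R ^ 2) with hε
  have hε0 : 0 < ε := by positivity
  have hεR : ε * R ^ 2 = δ / 4 := by rw [hε]; field_simp
  set g : E3 → ℝ := fun y => w y + ε * ‖y‖ ^ 2 with hg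
  set K : Set E3 := closedExt ∩ Metric.closedBall 0 R with hK
  have hclosed : IsClosed closedExt := isClosed_le continuous_const continuous_norm
  have hKc : IsCompact K := (isCompact_closedBall _ _).inter_left hclosed
  have hx0K : x0 ∈ K := ⟨hx0, by simp; linarith⟩
  have hgc : ContinuousOn g K := (hc.mono Set.inter_subset_left).add (by fun_prop)
  obtain ⟨y, hyK, hy⟩ := hKc.exists_isMaxOn ⟨x0, hx0K⟩ hgc
  have hyR : ‖y‖ ≤ R := by simpa using hyK.2
  have hy1 : 1 ≤ ‖y‖ := hyK.1
  have hgy : g x0 ≤ g y := hy hx0K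
  have hgx0 : M + δ ≤ g x0 := by
    have : 0 ≤ ε * ‖x0‖ ^ 2 := by positivity
    simp only [hg]; linarith
  have hsq : ε * ‖y‖ ^ 2 ≤ δ / 4 := by
    rw [← hεR]; gcongr
  have hyne : 1 < ‖y‖ := by
    rcases hy1.lt_or_eq with h | h
    · exact h
    · exfalso
      have := hb y h.symm
      simp only [hg] at hgy hgx0; linarith
  have hyRlt : ‖y‖ < R := by
    rcases hyR.lt_or_eq with h | h
    · exact h
    · exfalso
      have := hR0 R hRR y h
      simp only [hg] at hgy hgx0; linarith
  have hnb : K ∈ nhds y := by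
    have : extDomain ∩ Metric.ball 0 R ∈ nhds y :=
      (isOpen_ext.inter Metric.isOpen_ball).mem_nhds ⟨hyne, by simpa using hyRlt⟩
    refine Filter.mem_of_superset this (Set.inter_subset_inter ?_ Metric.ball_subset_closedBall)
    intro z hz; exact le_of_lt (show 1 < ‖z‖ from hz)
  have hlm : IsLocalMax g y := hy.isLocalMax hnb
  have hwd : ContDiffAt ℝ 2 w y := h2.contDiffAt (isOpen_ext.mem_nhds hyne)
  have hnd : ContDiffAt ℝ 2 (fun y : E3 => ‖y‖ ^ 2) y := (contDiff_norm_sq ℝ).contDiffAt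
  have hgd : ContDiffAt ℝ 2 g y := hwd.add (contDiffAt_const.mul hnd)
  have hlap : lap g y = 6 * ε := by
    rw [hg, lap_add_smul hwd hnd, hl y hyne, lap_normSq]; ring
  have : lap g y ≤ 0 := Finset.sum_nonpos fun i _ => second_deriv_le hgd hlm _
  linarith

/-! ### Expansion of axial exterior harmonic functions -/

lemma yb_abs_le' (l : ℕ) (t : ℝ) : |yb l t| ≤ ((l : ℝ) + 1) * al l :=
  (yb_abs_le l t).trans (le_mul_of_one_le_left (al_pos l).le (by linarith [(Nat.cast_nonneg l : (0 : ℝ) ≤ l)]))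

lemma complete_aux {h : ℝ → ℝ} (hc : Continuous h) (h0 : ∀ l, Jn (fun t => h t * yb l t) = 0) (j : ℕ) :
    ∀ n, Jn (fun t => h t * (sin t ^ j * (legendreP n).eval (sin t))) = 0 := by
  have hP : ∀ n, Continuous fun t => (legendreP n).eval (sin t) := fun n =>
    (legendreP n).continuous.comp continuous_sin
  induction j with
  | zero =>
    intro n
    have e : (fun t => h t * yb n t) = fun t => al n * (h t * (sin t ^ 0 * (legendreP n).eval (sin t))) := by
      funext t; simp [yb]; ring
    have := h0 n
    rw [e, Jn_const_mul] at this
    exact (mul_eq_zero.mp this).resolve_left (al_pos n).ne'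
  | succ j ih =>
    intro n
    obtain ⟨a, b, k, _, hk⟩ := leg_X_mul n
    have e : (fun t => h t * (sin t ^ (j + 1) * (legendreP n).eval (sin t))) = fun t =>
        a * (h t * (sin t ^ j * (legendreP (n + 1)).eval (sin t))) +
        b * (h t * (sin t ^ j * (legendreP k).eval (sin t))) := by
      funext t
      have := congrArg (Polynomial.eval (sin t)) hk
      simp at this
      linear_combination (h t * sin t ^ j) * this
    have h1 := hP (n + 1)
    have h2 := hP k
    rw [e, Jn_add (by fun_prop) (by fun_prop), Jn_const_mul, Jn_const_mul, ih, ih]; simp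

lemma complete_poly {h : ℝ → ℝ} (hc : Continuous h) (h0 : ∀ l, Jn (fun t => h t * yb l t) = 0)
    (p : Polynomial ℝ) : Jn (fun t => h t * p.eval (sin t)) = 0 := by
  have e : (fun t => h t * p.eval (sin t)) = fun t => ∑ j ∈ Finset.range (p.natDegree + 1),
      p.coeff j * (h t * (sin t ^ j * (legendreP 0).eval (sin t))) := by
    funext t
    rw [Polynomial.eval_eq_sum_range, Finset.mul_sum]
    refine Finset.sum_congr rfl fun j _ => ?_
    rw [leg_zero]; simp; ring
  have h1 : Continuous fun t => (legendreP 0).eval (sin t) := (legendreP 0).continuous.comp continuous_sin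
  rw [e, Jn_sum _ (by fun_prop)]
  exact Finset.sum_eq_zero fun j _ => by rw [Jn_const_mul, complete_aux hc h0]; simp

lemma complete {h : ℝ → ℝ} (hc : Continuous h) (hh : ∀ t, h t = h (arcsin (sin t)))
    (h0 : ∀ l, Jn (fun t => h t * yb l t) = 0) (t : ℝ) : h t = 0 := by
  have key : Jn (fun t => h t ^ 2) ≤ 0 := by
    have : ∀ ε : ℝ, 0 < ε → Jn (fun t => h t ^ 2) ≤ ε * Jn (fun t => |h t|) := by
      intro ε hε
      obtain ⟨p, hp⟩ := exists_polynomial_near_of_continuousOn (-1) 1 (fun x => h (arcsin x))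
        (by fun_prop) ε hε
      have hcp : Continuous fun t => p.eval (sin t) := p.continuous.comp continuous_sin
      have e : (fun t => h t ^ 2) = fun t => h t * (h t - p.eval (sin t)) + h t * p.eval (sin t) := by
        funext t; ring
      rw [e, Jn_add (by fun_prop) (by fun_prop), complete_poly hc h0, add_zero, ← Jn_const_mul]
      apply Jn_mono (by fun_prop) (by fun_prop)
      intro t
      have := hp (sin t) ⟨neg_one_le_sin t, sin_le_one t⟩
      rw [← hh] at this
      calc h t * (h t - p.eval (sin t)) ≤ |h t * (h t - p.eval (sin t))| := le_abs_self _
        _ = |p.eval (sin t) - h t| * |h t| := by rw [abs_mul, abs_sub_comm, mul_comm]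
        _ ≤ ε * |h t| := mul_le_mul_of_nonneg_right this.le (abs_nonneg _)
    have hlim : Tendsto (fun ε : ℝ => ε * Jn (fun t => |h t|)) (nhdsWithin 0 (Set.Ioi 0)) (nhds 0) := by
      have : Tendsto (fun ε : ℝ => ε * Jn (fun t => |h t|)) (nhds 0) (nhds (0 * Jn (fun t => |h t|))) :=
        tendsto_id.mul_const _
      rw [zero_mul] at this
      exact this.mono_left nhdsWithin_le_nhds
    apply ge_of_tendsto hlim
    filter_upwards [self_mem_nhdsWithin] with ε hε using this ε hε
  have hpi := Real.pi_pos
  have hz : ∀ c ∈ Set.Icc (-(Real.pi / 2)) (Real.pi / 2), h c ^ 2 * cos c = 0 := by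
    by_contra! hne
    obtain ⟨c, hc1, hc2⟩ := hne
    have hnn : ∀ x ∈ Set.Icc (-(Real.pi / 2)) (Real.pi / 2), 0 ≤ h x ^ 2 * cos x := fun x hx =>
      mul_nonneg (sq_nonneg _) (cos_nonneg_of_mem_Icc hx)
    have := intervalIntegral.integral_pos (a := -(Real.pi / 2)) (b := Real.pi / 2)
      (f := fun x => h x ^ 2 * cos x) (by linarith) (by fun_prop)
      (fun x hx => hnn x ⟨hx.1.le, hx.2⟩) ⟨c, hc1, lt_of_le_of_ne (hnn c hc1) (Ne.symm hc2)⟩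
    unfold Jn at key
    nlinarith
  have hcl : Set.Icc (-(Real.pi / 2)) (Real.pi / 2) ⊆ {x | h x = 0} := by
    rw [← closure_Ioo (by linarith)]
    apply closure_minimal _ (isClosed_eq hc continuous_const)
    intro x hx
    have h1 := hz x ⟨hx.1.le, hx.2.le⟩
    have h2 := cos_pos_of_mem_Ioo hx
    have := (mul_eq_zero.mp h1).resolve_right h2.ne'
    exact pow_eq_zero_iff (two_ne_zero) |>.mp this
  rw [hh]
  exact hcl ⟨neg_pi_div_two_le_arcsin _, arcsin_le_pi_div_two _⟩

lemma sph_norm (θ φ : ℝ) : ‖sphCoord θ φ‖ = 1 := by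
  have : ‖sphCoord θ φ‖ ^ 2 = 1 := by
    rw [EuclideanSpace.real_norm_sq_eq, Fin.sum_univ_three]
    simp [sphCoord]
    nlinarith [sin_sq_add_cos_sq θ, sin_sq_add_cos_sq φ]
  exact (pow_eq_one_iff_of_nonneg (norm_nonneg _) two_ne_zero).mp this

lemma sph_two (θ φ : ℝ) : sphCoord θ φ 2 = sin θ := by simp [sphCoord]

lemma sph_cont (φ : ℝ) : Continuous fun θ => sphCoord θ φ := by
  unfold sphCoord
  apply (PiLp.continuous_toLp 2 _).comp
  refine continuous_pi fun i => ?_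
  fin_cases i <;> simp <;> fun_prop

lemma sph_surj {x : E3} (hx : ‖x‖ = 1) : ∃ θ φ, x = sphCoord θ φ := by
  have hsq : x 0 ^ 2 + x 1 ^ 2 + x 2 ^ 2 = 1 := by
    have := EuclideanSpace.real_norm_sq_eq x
    rw [hx, Fin.sum_univ_three] at this; linarith
  set z : ℂ := ⟨x 0, x 1⟩ with hz
  have hn : ‖z‖ ^ 2 = x 0 ^ 2 + x 1 ^ 2 := by rw [← Complex.normSq_eq_norm_sq, Complex.normSq_apply]; simp [hz]; ring
  refine ⟨arcsin (x 2), Complex.arg z, ?_⟩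
  have hc : cos (arcsin (x 2)) = ‖z‖ := by
    rw [cos_arcsin, show 1 - x 2 ^ 2 = ‖z‖ ^ 2 by rw [hn]; linarith, Real.sqrt_sq (norm_nonneg _)]
  have hs : sin (arcsin (x 2)) = x 2 := sin_arcsin (by nlinarith [sq_nonneg (x 0), sq_nonneg (x 1)])
    (by nlinarith [sq_nonneg (x 0), sq_nonneg (x 1)])
  ext i
  fin_cases i
  · simp [sphCoord, hc, Complex.norm_mul_cos_arg, hz]
  · simp [sphCoord, hc, Complex.norm_mul_sin_arg, hz]
  · simp [sphCoord, hs]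

lemma axial_arcsin {u : E3 → ℝ} (hu : Axial (traceR u)) (θ φ : ℝ) :
    u (sphCoord θ φ) = u (sphCoord (arcsin (sin θ)) 0) := by
  have ax : ∀ θ a b, u (sphCoord θ a) = u (sphCoord θ b) := fun θ a b =>
    Complex.ofReal_injective (hu θ a b)
  have hc : cos (arcsin (sin θ)) = |cos θ| := by
    rw [cos_arcsin, show 1 - sin θ ^ 2 = cos θ ^ 2 by rw [← sin_sq_add_cos_sq θ]; ring, Real.sqrt_sq_eq_abs]
  have hs : sin (arcsin (sin θ)) = sin θ := sin_arcsin (neg_one_le_sin θ) (sin_le_one θ)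
  rw [ax θ φ 0]
  rcases le_total 0 (cos θ) with h | h
  · congr 1
    simp only [sphCoord, hc, hs, abs_of_nonneg h]
  · rw [ax (arcsin (sin θ)) 0 Real.pi]
    congr 1
    simp only [sphCoord, hc, hs, abs_of_nonpos h]; simp

/-- Harmonic functions in the exterior, continuous up to the sphere and vanishing at infinity. -/
structure Harm (u : E3 → ℝ) : Prop where
  smooth : ContDiffOn ℝ 2 u extDomain
  lap : ∀ x ∈ extDomain, lap u x = 0
  cont : ContinuousOn u closedExt
  lim : Tendsto u (Bornology.cobounded _) (nhds 0)

lemma Harm.add_smul {u v : E3 → ℝ} (hu : Harm u) (hv : Harm v) (c : ℝ) : Harm (fun y => u y + c * v y) where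
  smooth := hu.smooth.add (contDiffOn_const.mul hv.smooth)
  lap x hx := by
    rw [lap_add_smul (hu.smooth.contDiffAt (isOpen_ext.mem_nhds hx)) (hv.smooth.contDiffAt (isOpen_ext.mem_nhds hx)),
      hu.lap x hx, hv.lap x hx]; simp
  cont := hu.cont.add (continuousOn_const.mul hv.cont)
  lim := by simpa using hu.lim.add (hv.lim.const_mul c)

lemma ne_zero_of_closed {y : E3} (hy : y ∈ closedExt) : y ≠ 0 := by
  rintro rfl
  have : (1 : ℝ) ≤ ‖(0 : E3)‖ := hy
  simp at this; linarith

lemma solid_abs_le (l : ℕ) {y : E3} (hy : y ∈ closedExt) : |solid (l + 1) (legendreP l) y| ≤ ‖y‖⁻¹ := by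
  have h1 : 1 ≤ ‖y‖ := hy
  have hi : ‖y‖⁻¹ ≤ 1 := inv_le_one_of_one_le₀ h1
  have hy2 : |y 2 * ‖y‖⁻¹| ≤ 1 := by
    rw [abs_mul, abs_of_nonneg (inv_nonneg.mpr (norm_nonneg y))]
    rw [← div_eq_mul_inv]
    exact div_le_one_of_le₀ (by simpa using PiLp.norm_apply_le y 2) (norm_nonneg _)
  have hP := leg_abs_le (n := l) (x := y 2 * ‖y‖⁻¹) (abs_le.mp hy2)
  unfold solid
  rw [abs_mul, abs_of_nonneg (by positivity), pow_succ]
  have hp : ‖y‖⁻¹ ^ l ≤ 1 := pow_le_one₀ (by positivity) hi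
  have h0 : 0 ≤ ‖y‖⁻¹ := by positivity
  have h0' : 0 ≤ ‖y‖⁻¹ ^ l := by positivity
  calc _ ≤ (1 * ‖y‖⁻¹) * 1 := by gcongr
    _ = _ := by ring

lemma harm_solid (l : ℕ) : Harm (solid (l + 1) (legendreP l)) where
  smooth x hx := (contDiffAt_solid _ _ (ne_zero_of_closed (le_of_lt (show 1 < ‖x‖ from hx)))).contDiffWithinAt
  lap x hx := lap_solid_leg l (ne_zero_of_closed (le_of_lt (show 1 < ‖x‖ from hx)))
  cont x hx := (contDiffAt_solid _ _ (ne_zero_of_closed hx)).continuousAt.continuousWithinAt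
  lim := by
    apply squeeze_zero_norm' _ (tendsto_inv_atTop_zero.comp (tendsto_norm_cobounded_atTop (E := E3)))
    filter_upwards [(tendsto_norm_cobounded_atTop (E := E3)).eventually_ge_atTop 1] with y hy
    exact solid_abs_le l hy

lemma solid_sph (l : ℕ) {r : ℝ} (hr : 1 ≤ r) (θ φ : ℝ) :
    al l * solid (l + 1) (legendreP l) (r • sphCoord θ φ) = (r⁻¹) ^ (l + 1) * yb l θ := by
  have hn : ‖r • sphCoord θ φ‖ = r := by rw [norm_smul, sph_norm]; simp; linarith
  have h2 : (r • sphCoord θ φ) 2 = r * sin θ := by simp [sph_two]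
  have h3 : r * sin θ * r⁻¹ = sin θ := by field_simp
  unfold solid yb
  rw [hn, h2, h3]; ring

/-- The coefficients of the trace. -/
def cf (u : E3 → ℝ) (l : ℕ) : ℝ := Jn (fun t => u (sphCoord t 0) * yb l t)

lemma trace_cont {u : E3 → ℝ} (hu : Harm u) (φ : ℝ) : Continuous fun t => u (sphCoord t φ) := by
  rw [← continuousOn_univ]
  exact hu.cont.comp (sph_cont φ).continuousOn fun t _ => (sph_norm t φ).ge

lemma trace_eq {u : E3 → ℝ} (hu : Harm u) (hax : Axial (traceR u)) (ha : Adm (cf u)) (θ φ : ℝ) :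
    u (sphCoord θ φ) = ser yb (cf u) θ := by
  have cS : Continuous (ser yb (cf u)) := ser_cont yb_abs_le' yb_cont ha
  have cf' := trace_cont hu 0
  have hser : ∀ t, ser yb (cf u) t = ser yb (cf u) (arcsin (sin t)) := by
    intro t
    simp only [ser, yb, sin_arcsin (neg_one_le_sin t) (sin_le_one t)]
  have hyc := yb_cont
  have h := complete (h := fun t => u (sphCoord t 0) - ser yb (cf u) t) (cf'.sub cS) (fun t => by
      rw [axial_arcsin hax t 0, hser t]) (fun k => by
      have e : (fun t => (u (sphCoord t 0) - ser yb (cf u) t) * yb k t) = fun t =>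
        u (sphCoord t 0) * yb k t - ser yb (cf u) t * yb k t := by funext t; ring
      rw [e, Jn_sub (F := fun t => u (sphCoord t 0) * yb k t) (cf'.mul (hyc k)) (by fun_prop), sub_eq_zero]
      have hl : Tendsto (fun m => Jn (fun t => serP yb (cf u) m t * yb k t)) atTop
          (nhds (Jn (fun t => ser yb (cf u) t * yb k t))) := by
        apply Jn_tendsto (C := bnd (cf u) * (((k : ℝ) + 1) * al k))
        · intro n; have := serP_cont hyc (cf u) n; fun_prop
        · intro n t
          rw [abs_mul]
          exact mul_le_mul (serP_le yb_abs_le' ha n t) (yb_abs_le' k t) (abs_nonneg _) (bnd_nonneg _)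
        · intro t
          exact (ser_tendsto yb_abs_le' ha t).mul_const _
      refine tendsto_nhds_unique ?_ hl
      apply tendsto_const_nhds.congr'
      filter_upwards [eventually_gt_atTop k] with m hm
      have e2 : (fun t => serP yb (cf u) m t * yb k t) = fun t =>
        ∑ l ∈ Finset.range m, cf u l * (yb l t * yb k t) := by
        funext t; rw [serP, Finset.sum_mul]; exact Finset.sum_congr rfl fun _ _ => by ring
      rw [e2, Jn_sum _ (by fun_prop), Finset.sum_eq_single_of_mem k (Finset.mem_range.mpr hm)]
      · rw [Jn_const_mul, Jn_yy]; simp [cf]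
      · intro l _ hl
        rw [Jn_const_mul, Jn_yy, if_neg hl, mul_zero]) (arcsin (sin θ))
  rw [axial_arcsin hax, hser θ]
  exact sub_eq_zero.mp h

/-- The partial sums of the expansion. -/
def expP (a : ℕ → ℝ) (N : ℕ) (x : E3) : ℝ :=
  ∑ l ∈ Finset.range N, (a l * al l) * solid (l + 1) (legendreP l) x

lemma harm_sub_expP {u : E3 → ℝ} (hu : Harm u) (a : ℕ → ℝ) (N : ℕ) : Harm (fun x => u x - expP a N x) := by
  induction N with
  | zero => simpa [expP] using hu
  | succ N ih =>
    have := ih.add_smul (harm_solid N) (-(a N * al N))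
    convert this using 2 with x
    simp only [expP, Finset.sum_range_succ]; ring

lemma harm_neg {u : E3 → ℝ} (hu : Harm u) : Harm (fun x => - u x) := by
  have := hu.add_smul hu (-2)
  convert this using 2 with x; ring

lemma expansion {u : E3 → ℝ} (hu : Harm u) (hax : Axial (traceR u)) (ha : Adm (cf u)) {r : ℝ} (hr : 1 ≤ r) (θ φ : ℝ) :
    u (r • sphCoord θ φ) = ∑' l, cf u l * ((r⁻¹) ^ (l + 1) * yb l θ) := by
  set T : ℕ → ℝ := fun N => bnd (cf u) - ∑ l ∈ Finset.range N, |cf u l| * (((l : ℝ) + 1) * al l) with hT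
  have hTnn : ∀ N, 0 ≤ T N := fun N => sub_nonneg.mpr <| ha.sum_le_tsum _ fun l _ =>
    mul_nonneg (abs_nonneg _) (mul_nonneg (by positivity) (al_pos l).le)
  have hT0 : Tendsto T atTop (nhds 0) := by
    have := (ha.hasSum.tendsto_sum_nat).const_sub (bnd (cf u))
    rw [show bnd (cf u) = ∑' l, |cf u l| * (((l : ℝ) + 1) * al l) from rfl, sub_self] at this
    exact this
  have hexp1 : ∀ N θ φ, expP (cf u) N (sphCoord θ φ) = serP yb (cf u) N θ := by
    intro N θ φ
    refine Finset.sum_congr rfl fun l _ => ?_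
    have := solid_sph l le_rfl θ φ
    simp only [one_smul, inv_one, one_pow, one_mul] at this
    rw [mul_assoc, this]
  have hbd : ∀ N x, ‖x‖ = 1 → |u x - expP (cf u) N x| ≤ T N := by
    intro N x hx
    obtain ⟨θ, φ, rfl⟩ := sph_surj hx
    rw [hexp1, trace_eq hu hax ha]
    have hl := ((ser_tendsto yb_abs_le' ha θ).sub_const (serP yb (cf u) N θ)).abs
    apply le_of_tendsto hl
    filter_upwards [eventually_ge_atTop N] with M hM
    rw [serP, serP, ← Finset.sum_Ico_eq_sub _ hM]
    refine (Finset.abs_sum_le_sum_abs _ _).trans ?_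
    refine (Finset.sum_le_sum fun l _ => term_le yb_abs_le' l θ).trans ?_
    rw [Finset.sum_Ico_eq_sub _ hM]
    exact sub_le_sub_right (ha.sum_le_tsum _ fun l _ =>
      mul_nonneg (abs_nonneg _) (mul_nonneg (by positivity) (al_pos l).le)) _
  have hx : r • sphCoord θ φ ∈ closedExt := by
    show 1 ≤ ‖r • sphCoord θ φ‖
    rw [norm_smul, sph_norm]; simp; exact hr.trans (le_abs_self r)
  have hN : ∀ N, |u (r • sphCoord θ φ) - expP (cf u) N (r • sphCoord θ φ)| ≤ T N := by
    intro N
    have H := harm_sub_expP hu (cf u) N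
    have H' := harm_neg H
    have h1 := max_principle H.smooth H.lap H.cont H.lim (hTnn N)
      (fun x hx => (le_abs_self _).trans (hbd N x hx)) _ hx
    have h2 := max_principle H'.smooth H'.lap H'.cont H'.lim (hTnn N)
      (fun x hx => (neg_le_abs _).trans (hbd N x hx)) _ hx
    exact abs_le'.mpr ⟨h1, h2⟩
  have hlim : Tendsto (fun N => expP (cf u) N (r • sphCoord θ φ)) atTop (nhds (u (r • sphCoord θ φ))) := by
    rw [tendsto_iff_norm_sub_tendsto_zero]
    refine squeeze_zero (fun _ => norm_nonneg _) (fun N => ?_) hT0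
    rw [Real.norm_eq_abs, abs_sub_comm]; exact hN N
  have hsum : Summable fun l => cf u l * ((r⁻¹) ^ (l + 1) * yb l θ) := by
    refine Summable.of_norm_bounded ha fun l => ?_
    rw [Real.norm_eq_abs, abs_mul, abs_mul]
    refine mul_le_mul_of_nonneg_left ?_ (abs_nonneg _)
    refine (mul_le_of_le_one_left (abs_nonneg _) ?_).trans (yb_abs_le' l θ)
    rw [abs_of_nonneg (by positivity)]
    exact pow_le_one₀ (by positivity) (inv_le_one_of_one_le₀ hr)
  refine tendsto_nhds_unique hlim ?_
  refine hsum.hasSum.tendsto_sum_nat.congr fun N => ?_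
  refine Finset.sum_congr rfl fun l _ => ?_
  rw [← solid_sph l hr θ φ]; ring

/-! ### Boundary derivatives -/

/-- The weighted family. -/
def wb (l : ℕ) (t : ℝ) : ℝ := ((l : ℝ) + 1) * yb l t

lemma good_wb : GoodFam wb := good_yb

lemma thetaDeriv_eq {u : E3 → ℝ} (hu : Harm u) (hax : Axial (traceR u)) (ha : Adm (cf u)) (θ φ : ℝ) :
    thetaDeriv u θ φ = ser zb (cf u) θ := by
  unfold thetaDeriv
  have e : (fun t => u (sphCoord t φ)) = fun t => ∑' l, cf u l * yb l t := by
    funext t; exact trace_eq hu hax ha t φ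
  rw [e]
  have := hasDerivAt_tsum (u := fun l : ℕ => |cf u l| * (((l : ℝ) + 1) * al l))
    (g := fun l t => cf u l * yb l t) (g' := fun l t => cf u l * zb l t) ha
    (fun l t => (yb_hasDerivAt l t).const_mul _) (fun l t => term_le good_zb.bound l t)
    (y₀ := 0) (ser_summable yb_abs_le' ha 0) θ
  exact this.deriv

lemma quot_le (n : ℕ) {r : ℝ} (hr : 1 < r) : |(r - 1)⁻¹ * ((r⁻¹) ^ n - 1)| ≤ n := by
  have h0 : 0 < r - 1 := by linarith
  have hi0 : 0 < r⁻¹ := by positivity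
  have hi : r⁻¹ ≤ 1 := inv_le_one_of_one_le₀ hr.le
  have h1 := one_add_mul_le_pow (a := r⁻¹ - 1) (by linarith) n
  have h2 : (r⁻¹) ^ n ≤ 1 := pow_le_one₀ hi0.le hi
  have h3 : 1 - r⁻¹ ≤ r - 1 := by
    have : r⁻¹ * r = 1 := inv_mul_cancel₀ (by linarith)
    nlinarith [sq_nonneg (r - 1)]
  rw [abs_mul, abs_of_pos (inv_pos.mpr h0), abs_of_nonpos (by linarith), inv_mul_le_iff₀ h0]
  have h4 : (1 + (r⁻¹ - 1)) = r⁻¹ := by ring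
  rw [h4] at h1
  have : (n : ℝ) * (1 - r⁻¹) ≤ n * (r - 1) := mul_le_mul_of_nonneg_left h3 (Nat.cast_nonneg n)
  nlinarith

lemma quot_lim (n : ℕ) : Tendsto (fun r : ℝ => (r - 1)⁻¹ * ((r⁻¹) ^ n - 1)) (nhdsWithin 1 (Set.Ioi 1)) (nhds (-(n : ℝ))) := by
  have h : HasDerivAt (fun r : ℝ => (r⁻¹) ^ n) (-(n : ℝ)) 1 := by
    have := (hasDerivAt_inv (one_ne_zero (α := ℝ))).fun_pow n
    simpa using this
  have h2 := h.hasDerivWithinAt (s := Set.Ioi 1)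
  rw [hasDerivWithinAt_iff_tendsto_slope' (by simp)] at h2
  refine h2.congr fun r => ?_
  simp [slope_def_field]; ring

lemma radialDeriv_eq {u : E3 → ℝ} (hu : Harm u) (hax : Axial (traceR u)) (ha : Adm (cf u)) (θ φ : ℝ) :
    radialDeriv u θ φ = - ser wb (cf u) θ := by
  have hs : ∀ {r : ℝ}, 1 ≤ r → Summable fun l => cf u l * ((r⁻¹) ^ (l + 1) * yb l θ) := by
    intro r hr
    refine Summable.of_norm_bounded ha fun l => ?_
    rw [Real.norm_eq_abs, abs_mul, abs_mul]
    refine mul_le_mul_of_nonneg_left ?_ (abs_nonneg _)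
    refine (mul_le_of_le_one_left (abs_nonneg _) ?_).trans (yb_abs_le' l θ)
    rw [abs_of_nonneg (by positivity)]
    exact pow_le_one₀ (by positivity) (inv_le_one_of_one_le₀ hr)
  have key : HasDerivWithinAt (fun r : ℝ => u (r • sphCoord θ φ)) (- ser wb (cf u) θ) (Set.Ioi 1) 1 := by
    rw [hasDerivWithinAt_iff_tendsto_slope' (by simp)]
    have e : ∀ r : ℝ, r ∈ Set.Ioi (1 : ℝ) → slope (fun r : ℝ => u (r • sphCoord θ φ)) 1 r =
        ∑' l, (cf u l * yb l θ) * ((r - 1)⁻¹ * ((r⁻¹) ^ (l + 1) - 1)) := by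
      intro r hr
      have hr' : 1 ≤ r := le_of_lt hr
      simp only [slope_def_module, smul_eq_mul]
      rw [expansion hu hax ha hr', expansion hu hax ha le_rfl, ← (hs hr').tsum_sub (hs le_rfl), ← tsum_mul_left]
      refine tsum_congr fun l => ?_
      simp; ring
    have lim : Tendsto (fun r : ℝ => ∑' l, (cf u l * yb l θ) * ((r - 1)⁻¹ * ((r⁻¹) ^ (l + 1) - 1)))
        (nhdsWithin 1 (Set.Ioi 1)) (nhds (∑' l, (cf u l * yb l θ) * (-((l + 1 : ℕ) : ℝ)))) := by
      apply tendsto_tsum_of_dominated_convergence ha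
      · intro l; exact (quot_lim (l + 1)).const_mul _
      · filter_upwards [self_mem_nhdsWithin] with r hr l
        rw [Real.norm_eq_abs, abs_mul, abs_mul, mul_assoc]
        refine mul_le_mul_of_nonneg_left ?_ (abs_nonneg _)
        rw [mul_comm]
        have := quot_le (l + 1) hr
        push_cast at this
        exact mul_le_mul this (yb_abs_le l θ) (abs_nonneg _) (by positivity)
    have e2 : - ser wb (cf u) θ = ∑' l, (cf u l * yb l θ) * (-((l + 1 : ℕ) : ℝ)) := by
      unfold ser wb
      rw [← tsum_neg]
      refine tsum_congr fun l => ?_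
      push_cast; ring
    rw [e2]
    apply lim.congr'
    filter_upwards [self_mem_nhdsWithin] with r hr using (e r hr).symm
  unfold radialDeriv
  exact (hasDerivWithinAt_Ioi_iff_Ici.mp key).derivWithin (uniqueDiffWithinAt_Ici 1)

/-- The squared gradient on the sphere. -/
def gs (u : E3 → ℝ) (t : ℝ) : ℝ := ser wb (cf u) t * ser wb (cf u) t + ser zb (cf u) t * ser zb (cf u) t

lemma gradSqS_eq {u : E3 → ℝ} (hu : Harm u) (hax : Axial (traceR u)) (ha : Adm (cf u)) :
    gradSqS u = fun θ _ => ((gs u θ : ℝ) : ℂ) := by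
  funext θ φ
  unfold gradSqS gs
  rw [radialDeriv_eq hu hax ha, thetaDeriv_eq hu hax ha]
  congr 1; ring

/-! ### Fourier-Laplace coefficients of axial functions -/

lemma exp_int (m : ℤ) (hm : m ≠ 0) :
    ∫ φ in Set.Ico (-Real.pi) Real.pi, (starRingEnd ℂ) (Complex.exp (Complex.I * m * φ)) = 0 := by
  have e : ∀ φ : ℝ, (starRingEnd ℂ) (Complex.exp (Complex.I * m * φ)) = Complex.exp ((-(Complex.I * m)) * φ) := by
    intro φ
    rw [← Complex.exp_conj]; simp
  simp only [e]
  rw [integral_Ico_eq_integral_Ioc, ← intervalIntegral.integral_of_le (by linarith [Real.pi_pos]),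
    integral_exp_mul_complex (by simp [hm])]
  have : Complex.exp (-(Complex.I * m) * (Real.pi : ℝ)) = Complex.exp (-(Complex.I * m) * ((-Real.pi : ℝ) : ℂ)) := by
    rw [Complex.exp_eq_exp_iff_exists_int]
    refine ⟨-m, ?_⟩
    push_cast; ring
  rw [this]; simp

lemma exp_int_zero :
    ∫ φ in Set.Ico (-Real.pi) Real.pi, (starRingEnd ℂ) (Complex.exp (Complex.I * (0 : ℤ) * (φ : ℝ))) = ((2 * Real.pi : ℝ) : ℂ) := by
  simp [Measure.real, Real.volume_Ico]
  rw [ENNReal.toReal_ofReal (by linarith [Real.pi_pos])]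
  push_cast; ring

lemma flCoeff_prod (F : ℝ → ℝ) (l : ℕ) (m : ℤ) : flCoeff (fun θ _ => ((F θ : ℝ) : ℂ)) l m =
    (∫ θ in Set.Icc (-(Real.pi / 2)) (Real.pi / 2),
      (((ENNReal.ofReal (cos θ)).toReal * (F θ * (alphaY l m * assocLegendre l m.natAbs (sin θ))) : ℝ) : ℂ)) *
    ∫ φ in Set.Ico (-Real.pi) Real.pi, (starRingEnd ℂ) (Complex.exp (Complex.I * m * φ)) := by
  unfold flCoeff sphereMeasure
  rw [integral_withDensity_eq_integral_toReal_smul (by fun_prop) (by simp)]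
  rw [Measure.volume_eq_prod, ← Measure.prod_restrict, ← integral_prod_mul]
  congr 1
  funext p
  simp only [Ylm, map_mul, Complex.conj_ofReal, Complex.real_smul]
  push_cast; ring

lemma flCoeff_ne (F : ℝ → ℝ) (l : ℕ) {m : ℤ} (hm : m ≠ 0) : flCoeff (fun θ _ => ((F θ : ℝ) : ℂ)) l m = 0 := by
  rw [flCoeff_prod, exp_int m hm, mul_zero]

lemma flCoeff_zero (F : ℝ → ℝ) (l : ℕ) :
    flCoeff (fun θ _ => ((F θ : ℝ) : ℂ)) l 0 = ((Jn (fun t => F t * yb l t) : ℝ) : ℂ) := by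
  rw [flCoeff_prod, exp_int_zero, integral_complex_ofReal, ← Complex.ofReal_mul]
  congr 1
  unfold Jn
  rw [mul_comm, intervalIntegral.integral_of_le (by linarith [Real.pi_pos]), ← integral_Icc_eq_integral_Ioc]
  congr 1
  apply setIntegral_congr_fun measurableSet_Icc
  intro t ht
  simp only
  rw [ENNReal.toReal_ofReal (cos_nonneg_of_mem_Icc ht)]
  simp [assocLegendre, yb, al]
  ring

lemma hs_summable_iff (s : ℝ) (F : ℝ → ℝ) :
    (Summable fun p : ℕ × ℤ => ((p.1 : ℝ) + 1) ^ (2 * s) * ‖flCoeff (fun θ _ => ((F θ : ℝ) : ℂ)) p.1 p.2‖ ^ 2) ↔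
    Sm s (fun l => Jn (fun t => F t * yb l t)) := by
  have hi : Function.Injective fun l : ℕ => (l, (0 : ℤ)) := fun a b h => by simpa using h
  rw [← hi.summable_iff]
  · unfold Sm
    simp only [Function.comp_def, flCoeff_zero, Complex.norm_real, Real.norm_eq_abs, sq_abs]
  · rintro ⟨l, m⟩ h
    have hm : m ≠ 0 := by rintro rfl; exact h ⟨l, rfl⟩
    simp [flCoeff_ne F l hm]

lemma hsNorm_eq (s : ℝ) (F : ℝ → ℝ) :
    HsNorm s (fun θ _ => ((F θ : ℝ) : ℂ)) = Real.sqrt (nrm2 s (fun l => Jn (fun t => F t * yb l t))) := by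
  have hi : Function.Injective fun l : ℕ => (l, (0 : ℤ)) := fun a b h => by simpa using h
  unfold HsNorm nrm2
  rw [← hi.tsum_eq]
  · simp only [flCoeff_zero, Complex.norm_real, Real.norm_eq_abs, sq_abs]
  · rintro ⟨l, m⟩ h
    by_contra hc
    have hm : m ≠ 0 := by rintro rfl; exact hc ⟨l, rfl⟩
    exact h (by simp [flCoeff_ne F l hm])

lemma sphere_finite : IsFiniteMeasure sphereMeasure := by
  have h : sphereMeasure ≤ (volume : Measure (ℝ × ℝ)).restrict
      (Set.Icc (-(Real.pi / 2)) (Real.pi / 2) ×ˢ Set.Ico (-Real.pi) Real.pi) := by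
    unfold sphereMeasure
    conv_rhs => rw [← withDensity_one (μ := (volume : Measure (ℝ × ℝ)).restrict
      (Set.Icc (-(Real.pi / 2)) (Real.pi / 2) ×ˢ Set.Ico (-Real.pi) Real.pi))]
    apply withDensity_mono
    filter_upwards with p
    simpa using cos_le_one p.1
  have hf : IsFiniteMeasure ((volume : Measure (ℝ × ℝ)).restrict
      (Set.Icc (-(Real.pi / 2)) (Real.pi / 2) ×ˢ Set.Ico (-Real.pi) Real.pi)) := by
    rw [Measure.volume_eq_prod, ← Measure.prod_restrict]
    infer_instance
  exact isFiniteMeasure_of_le _ h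

lemma memHs_of {s : ℝ} {F : ℝ → ℝ} (hF : Continuous F) {B : ℝ} (hB : ∀ t, |F t| ≤ B)
    (hS : Sm s (fun l => Jn (fun t => F t * yb l t))) : MemHs s (fun θ _ => ((F θ : ℝ) : ℂ)) := by
  refine ⟨?_, (hs_summable_iff s F).mpr hS⟩
  have := sphere_finite
  refine MemLp.of_bound (C := B) ?_ ?_
  · have : Continuous fun p : ℝ × ℝ => ((F p.1 : ℝ) : ℂ) := by fun_prop
    exact this.aestronglyMeasurable
  · filter_upwards with p
    simpa using hB p.1

lemma traceR_eq {u : E3 → ℝ} (hax : Axial (traceR u)) :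
    traceR u = fun θ _ => ((u (sphCoord θ 0) : ℝ) : ℂ) := by
  funext θ φ
  exact hax θ φ 0

/-! ### Assembly -/

lemma sm_comb {σ : ℝ} {a b c : ℕ → ℝ} (ha : Sm σ a) (hb : Sm σ b) (h : ∀ l, c l ^ 2 ≤ 2 * a l ^ 2 + 2 * b l ^ 2) :
    Sm σ c ∧ nrm2 σ c ≤ 2 * nrm2 σ a + 2 * nrm2 σ b := by
  have hle : ∀ l : ℕ, ((l : ℝ) + 1) ^ (2 * σ) * c l ^ 2 ≤ 2 * (((l : ℝ) + 1) ^ (2 * σ) * a l ^ 2) +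
      2 * (((l : ℝ) + 1) ^ (2 * σ) * b l ^ 2) := by
    intro l
    have h0 : 0 ≤ ((l : ℝ) + 1) ^ (2 * σ) := by positivity
    nlinarith [mul_le_mul_of_nonneg_left (h l) h0]
  have hs : Summable fun l : ℕ => 2 * (((l : ℝ) + 1) ^ (2 * σ) * a l ^ 2) +
      2 * (((l : ℝ) + 1) ^ (2 * σ) * b l ^ 2) := (ha.mul_left 2).add (hb.mul_left 2)
  have hc : Sm σ c := Summable.of_nonneg_of_le (fun l => by positivity) hle hs
  refine ⟨hc, ?_⟩
  have := hc.tsum_le_tsum hle hs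
  rw [Summable.tsum_add (ha.mul_left 2) (hb.mul_left 2), tsum_mul_left, tsum_mul_left] at this
  exact this

/-- The gradient product. -/
def gp (a b : ℕ → ℝ) (t : ℝ) : ℝ := ser wb a t * ser wb b t + ser zb a t * ser zb b t

lemma gp_cont {a b : ℕ → ℝ} (ha : Adm a) (hb : Adm b) : Continuous (gp a b) := by
  unfold gp
  exact ((ser_cont good_wb.bound good_wb.cont ha).mul (ser_cont good_wb.bound good_wb.cont hb)).add
    ((ser_cont good_zb.bound good_zb.cont ha).mul (ser_cont good_zb.bound good_zb.cont hb))

lemma gp_le {a b : ℕ → ℝ} (ha : Adm a) (hb : Adm b) (t : ℝ) : |gp a b t| ≤ bnd a * bnd b + bnd a * bnd b := by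
  unfold gp
  refine (abs_add_le _ _).trans (add_le_add ?_ ?_)
  · rw [abs_mul]
    exact mul_le_mul (ser_le good_wb.bound ha t) (ser_le good_wb.bound hb t) (abs_nonneg _) (bnd_nonneg _)
  · rw [abs_mul]
    exact mul_le_mul (ser_le good_zb.bound ha t) (ser_le good_zb.bound hb t) (abs_nonneg _) (bnd_nonneg _)

lemma gp_est {s : ℝ} (hs : 1 < s) {a b : ℕ → ℝ} (sa : Sm (s + 1) a) (sb : Sm (s + 1) b) :
    Sm s (fun L => Jn (fun t => gp a b t * yb L t)) ∧
    nrm2 s (fun L => Jn (fun t => gp a b t * yb L t)) ≤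
      (16 * 2 ^ (2 * s) * Kc s) * (nrm2 (s + 1) a * nrm2 (s + 1) b) := by
  obtain ⟨ha, ba⟩ := adm_of_Sm hs sa
  obtain ⟨hb, bb⟩ := adm_of_Sm hs sb
  have na := nrm2_nonneg (s + 1) a
  have nb := nrm2_nonneg (s + 1) b
  have h1 := bilinear_fam good_wb (by linarith) ha hb sa sb
  have h2 := bilinear_fam good_zb (by linarith) ha hb sa sb
  have wa := ser_cont good_wb.bound good_wb.cont ha
  have wb' := ser_cont good_wb.bound good_wb.cont hb
  have za := ser_cont good_zb.bound good_zb.cont ha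
  have zb' := ser_cont good_zb.bound good_zb.cont hb
  have hy := yb_cont
  have h3 := sm_comb (c := fun L => Jn (fun t => gp a b t * yb L t)) h1.1 h2.1 (fun L => by
    have e : (fun t => gp a b t * yb L t) = fun t => ser wb a t * ser wb b t * yb L t +
      ser zb a t * ser zb b t * yb L t := by funext t; unfold gp; ring
    simp only [e]
    rw [Jn_add (by fun_prop) (by fun_prop)]
    exact add_sq_le.trans (by linarith))
  refine ⟨h3.1, h3.2.trans ?_⟩
  have p : (0 : ℝ) < 2 ^ (2 * s) := by positivity
  have q1 := mul_le_mul_of_nonneg_right bb na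
  have q2 := mul_le_mul_of_nonneg_right ba nb
  have q3 : (2 : ℝ) ^ (2 * s) * (bnd b ^ 2 * nrm2 (s + 1) a + bnd a ^ 2 * nrm2 (s + 1) b) ≤
      2 ^ (2 * s) * (Kc s * nrm2 (s + 1) b * nrm2 (s + 1) a + Kc s * nrm2 (s + 1) a * nrm2 (s + 1) b) :=
    mul_le_mul_of_nonneg_left (add_le_add q1 q2) p.le
  linarith [h1.2, h2.2]

lemma gs_sub {a b : ℕ → ℝ} (ha : Adm a) (hb : Adm b) (t : ℝ) :
    gp a a t - gp b b t = gp (fun l => a l - b l) (fun l => a l + b l) t := by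
  have hsub : ∀ {e : ℕ → ℝ → ℝ}, GoodFam e → ser e (fun l => a l - b l) t = ser e a t - ser e b t := by
    intro e he
    unfold ser
    rw [← (ser_summable he.bound ha t).tsum_sub (ser_summable he.bound hb t)]
    exact tsum_congr fun l => by ring
  have hadd : ∀ {e : ℕ → ℝ → ℝ}, GoodFam e → ser e (fun l => a l + b l) t = ser e a t + ser e b t := by
    intro e he
    unfold ser
    rw [← (ser_summable he.bound ha t).tsum_add (ser_summable he.bound hb t)]
    exact tsum_congr fun l => by ring
  unfold gp
  rw [hsub good_wb, hsub good_zb, hadd good_wb, hadd good_zb]; ring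

lemma Kc_nonneg (s : ℝ) : 0 ≤ Kc s := tsum_nonneg fun l => by positivity

lemma trace_norm {σ : ℝ} {u : E3 → ℝ} (hax : Axial (traceR u)) :
    HsNorm σ (traceR u) = Real.sqrt (nrm2 σ (cf u)) := by
  rw [traceR_eq hax]; exact hsNorm_eq σ _

lemma trace_sm {σ : ℝ} {u : E3 → ℝ} (hax : Axial (traceR u)) (h : MemHs σ (traceR u)) : Sm σ (cf u) := by
  rw [traceR_eq hax] at h
  exact (hs_summable_iff σ _).mp h.2

lemma grad_mem {s : ℝ} (hs : 1 < s) {u : E3 → ℝ} (hu : Harm u) (hax : Axial (traceR u))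
    (h : MemHs (s + 1) (traceR u)) : MemHs s (gradSqS u) ∧ Axial (gradSqS u) := by
  have sa := trace_sm hax h
  have ha := (adm_of_Sm hs sa).1
  rw [gradSqS_eq hu hax ha]
  refine ⟨memHs_of (gp_cont ha ha) (gp_le ha ha) (gp_est hs sa sa).1, fun _ _ _ => rfl⟩

/-- Lemma 4.2: if `u, v` are harmonic in the exterior of the unit
sphere, continuous up to the sphere, vanish at infinity, and have traces in
`H^{s+1}_ax(𝕊)` with `s > 1`, then `|∇u|², |∇v|² ∈ H^s_ax(𝕊)` with
`‖|∇u|²‖_{H^s} ≤ C ‖u‖²_{H^{s+1}}` and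
`‖|∇u|² - |∇v|²‖_{H^s} ≤ C (‖u‖_{H^{s+1}} + ‖v‖_{H^{s+1}}) ‖u - v‖_{H^{s+1}}`. -/
theorem gradient_squared_estimates (s : ℝ) (hs : 1 < s) :
    ∃ C > 0, ∀ u v : EuclideanSpace ℝ (Fin 3) → ℝ,
      ContDiffOn ℝ 2 u extDomain → (∀ x ∈ extDomain, lap u x = 0) →
      ContinuousOn u closedExt → Filter.Tendsto u (Bornology.cobounded _) (nhds 0) →
      MemHs (s + 1) (traceR u) → Axial (traceR u) →
      ContDiffOn ℝ 2 v extDomain → (∀ x ∈ extDomain, lap v x = 0) →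
      ContinuousOn v closedExt → Filter.Tendsto v (Bornology.cobounded _) (nhds 0) →
      MemHs (s + 1) (traceR v) → Axial (traceR v) →
      (MemHs s (gradSqS u) ∧ Axial (gradSqS u)) ∧
      (MemHs s (gradSqS v) ∧ Axial (gradSqS v)) ∧
      HsNorm s (gradSqS u) ≤ C * HsNorm (s + 1) (traceR u) ^ 2 ∧
      HsNorm s (fun θ φ => gradSqS u θ φ - gradSqS v θ φ) ≤
        C * (HsNorm (s + 1) (traceR u) + HsNorm (s + 1) (traceR v)) *
          HsNorm (s + 1) (fun θ φ => traceR u θ φ - traceR v θ φ) := by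
  set D : ℝ := 16 * 2 ^ (2 * s) * Kc s with hD
  have hD0 : 0 ≤ D := mul_nonneg (by positivity) (Kc_nonneg s)
  refine ⟨Real.sqrt (2 * D) + 1, by positivity, ?_⟩
  intro u v u1 u2 u3 u4 u5 u6 v1 v2 v3 v4 v5 v6
  have hu : Harm u := ⟨u1, u2, u3, u4⟩
  have hv : Harm v := ⟨v1, v2, v3, v4⟩
  have sa := trace_sm u6 u5
  have sb := trace_sm v6 v5
  have ha := (adm_of_Sm hs sa).1
  have hb := (adm_of_Sm hs sb).1
  have na := nrm2_nonneg (s + 1) (cf u)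
  have nb := nrm2_nonneg (s + 1) (cf v)
  refine ⟨grad_mem hs hu u6 u5, grad_mem hs hv v6 v5, ?_, ?_⟩
  · rw [trace_norm u6, Real.sq_sqrt na, gradSqS_eq hu u6 ha]
    have e := hsNorm_eq s (gs u)
    rw [e]
    refine (Real.sqrt_le_sqrt (gp_est hs sa sa).2).trans ?_
    rw [Real.sqrt_mul hD0, Real.sqrt_mul_self na]
    apply mul_le_mul_of_nonneg_right _ na
    have : Real.sqrt D ≤ Real.sqrt (2 * D) := Real.sqrt_le_sqrt (by linarith)
    linarith
  · have sd := sm_comb (c := fun l => cf u l - cf v l) sa sb (fun l => by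
      nlinarith [sq_nonneg (cf u l + cf v l)])
    have sp := sm_comb (c := fun l => cf u l + cf v l) sa sb (fun l => by
      nlinarith [sq_nonneg (cf u l - cf v l)])
    have e1 : (fun θ φ => gradSqS u θ φ - gradSqS v θ φ) = fun θ _ =>
        ((gp (fun l => cf u l - cf v l) (fun l => cf u l + cf v l) θ : ℝ) : ℂ) := by
      rw [gradSqS_eq hu u6 ha, gradSqS_eq hv v6 hb]
      funext θ φ
      rw [← gs_sub ha hb]
      push_cast [gs, gp]; rfl
    have e2 : (fun θ φ => traceR u θ φ - traceR v θ φ) = fun θ _ =>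
        ((u (sphCoord θ 0) - v (sphCoord θ 0) : ℝ) : ℂ) := by
      rw [traceR_eq u6, traceR_eq v6]
      funext θ φ
      push_cast; rfl
    have e3 : (fun l => Jn (fun t => (u (sphCoord t 0) - v (sphCoord t 0)) * yb l t)) =
        fun l => cf u l - cf v l := by
      funext l
      unfold cf
      rw [← Jn_sub (F := fun t => u (sphCoord t 0) * yb l t) (G := fun t => v (sphCoord t 0) * yb l t)
        ((trace_cont hu 0).mul (yb_cont l)) ((trace_cont hv 0).mul (yb_cont l))]
      congr 1; funext t; ring
    rw [e1, e2, hsNorm_eq s, hsNorm_eq (s + 1) (fun t => u (sphCoord t 0) - v (sphCoord t 0)), e3, trace_norm u6, trace_norm v6]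
    set A := Real.sqrt (nrm2 (s + 1) (cf u)) with hA
    set B := Real.sqrt (nrm2 (s + 1) (cf v)) with hB
    have hA0 : 0 ≤ A := Real.sqrt_nonneg _
    have hB0 : 0 ≤ B := Real.sqrt_nonneg _
    have hA2 : A ^ 2 = nrm2 (s + 1) (cf u) := Real.sq_sqrt na
    have hB2 : B ^ 2 = nrm2 (s + 1) (cf v) := Real.sq_sqrt nb
    have nd := nrm2_nonneg (s + 1) (fun l => cf u l - cf v l)
    have hbound : nrm2 (s + 1) (fun l => cf u l + cf v l) ≤ 2 * (A + B) ^ 2 := by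
      refine sp.2.trans ?_
      rw [← hA2, ← hB2]
      nlinarith [mul_nonneg hA0 hB0]
    refine (Real.sqrt_le_sqrt (y := (2 * D) * ((A + B) ^ 2 * nrm2 (s + 1) (fun l => cf u l - cf v l))) ?_).trans ?_
    · refine (gp_est hs sd.1 sp.1).2.trans ?_
      rw [← hD]
      have := mul_le_mul_of_nonneg_left (mul_le_mul_of_nonneg_left hbound nd) hD0
      linarith
    · rw [Real.sqrt_mul (show 0 ≤ 2 * D by positivity), Real.sqrt_mul (show 0 ≤ (A + B) ^ 2 by positivity),
        Real.sqrt_sq (show 0 ≤ A + B by positivity), ← mul_assoc]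
      apply mul_le_mul_of_nonneg_right _ (Real.sqrt_nonneg _)
      apply mul_le_mul_of_nonneg_right _ (by positivity)
      linarith

end
end

section
/- There are positive constants c and C such that for all integers m and all nonnegative integers k: c · ((|m|+2k+1)/(2k+1))^{1/4} ≤ (−1)^{(|m|−m)/2 + k} α_{|m|+2k}^m P_{|m|+2k}^{|m|}(0) ≤ C · ((|m|+2k+1)/(2k+1))^{1/4}. -/
noncomputable section

open MeasureTheory Real Filter

/-- Normalized central binomial coefficient. -/
def wallisW (n : ℕ) : ℝ := ((2 * n).factorial : ℝ) / (4 ^ n * (n.factorial : ℝ) ^ 2)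

theorem wallisW_succ (n : ℕ) :
    wallisW (n + 1) = wallisW n * ((2 * n + 1) / (2 * n + 2)) := by
  have h : (2 * (n + 1)).factorial = (2 * n + 2) * ((2 * n + 1) * (2 * n).factorial) := by
    rw [show 2 * (n + 1) = (2 * n + 1) + 1 by ring, Nat.factorial_succ, Nat.factorial_succ]
  have h0 : (n.factorial : ℝ) ≠ 0 := by positivity
  have h1 : (2 * (n : ℝ) + 2) ≠ 0 := by positivity
  have h2 : ((n : ℝ) + 1) ≠ 0 := by positivity
  unfold wallisW
  rw [h, Nat.factorial_succ]
  push_cast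
  field_simp
  ring

theorem wallisW_pos (n : ℕ) : 0 < wallisW n := by
  unfold wallisW; positivity

theorem wallisW_upper (n : ℕ) : wallisW n ^ 2 * (2 * n + 1) ≤ 1 := by
  induction n with
  | zero => simp [wallisW]
  | succ n ih =>
    rw [wallisW_succ]
    refine le_trans ?_ ih
    have h : ((2 * (n : ℝ) + 1) / (2 * n + 2)) ^ 2 * (2 * n + 3) ≤ 2 * n + 1 := by
      rw [div_pow, div_mul_eq_mul_div, div_le_iff₀ (by positivity)]
      have : (0 : ℝ) ≤ n := by positivity
      nlinarith
    have := mul_le_mul_of_nonneg_left h (sq_nonneg (wallisW n))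
    push_cast
    calc _ = _ := by ring
      _ ≤ _ := this

theorem wallisW_lower (n : ℕ) : 1 ≤ wallisW n ^ 2 * (4 * n + 1) := by
  induction n with
  | zero => simp [wallisW]
  | succ n ih =>
    rw [wallisW_succ]
    refine le_trans ih ?_
    have h : (4 * (n : ℝ) + 1) ≤ ((2 * (n : ℝ) + 1) / (2 * n + 2)) ^ 2 * (4 * n + 5) := by
      rw [div_pow, div_mul_eq_mul_div, le_div_iff₀ (by positivity)]
      have : (0 : ℝ) ≤ n := by positivity
      nlinarith
    have := mul_le_mul_of_nonneg_left h (sq_nonneg (wallisW n))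
    push_cast
    calc _ ≤ _ := this
      _ = _ := by ring

theorem coeff_aux (l j : ℕ) :
    ((Polynomial.X ^ 2 - 1 : Polynomial ℝ) ^ l).coeff (2 * j) =
      (-1) ^ (l - j) * (l.choose j : ℝ) := by
  have h : (Polynomial.X ^ 2 - 1 : Polynomial ℝ) ^ l =
      Polynomial.expand ℝ 2 ((Polynomial.X + Polynomial.C (-1)) ^ l) := by
    simp [sub_eq_add_neg]
  rw [h, mul_comm, Polynomial.coeff_expand_mul (by norm_num), Polynomial.coeff_X_add_C_pow]

theorem assocLegendre_zero (M k : ℕ) :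
    assocLegendre (M + 2 * k) M 0 = (-1) ^ M * ((-1) ^ k *
      (((2 * (M + k)).factorial : ℝ) /
        (2 ^ (M + 2 * k) * k.factorial * (M + k).factorial))) := by
  unfold assocLegendre legendreP
  rw [Polynomial.iterate_derivative_C_mul, ← Function.iterate_add_apply, Polynomial.eval_mul,
    Polynomial.eval_C, ← Polynomial.coeff_zero_eq_eval_zero, Polynomial.coeff_iterate_derivative]
  rw [show 0 + (M + (M + 2 * k)) = 2 * (M + k) by ring,
    show M + (M + 2 * k) = 2 * (M + k) by ring, coeff_aux, Nat.descFactorial_self,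
    show M + 2 * k - (M + k) = k by omega]
  have hc := Nat.choose_mul_factorial_mul_factorial (show M + k ≤ M + 2 * k by omega)
  rw [show M + 2 * k - (M + k) = k by omega] at hc
  have hc' : ((M + 2 * k).choose (M + k) : ℝ) * (M + k).factorial * k.factorial
      = (M + 2 * k).factorial := by exact_mod_cast hc
  have h0 : ((M + k).factorial : ℝ) ≠ 0 := by positivity
  have h1 : (k.factorial : ℝ) ≠ 0 := by positivity
  have h2 : ((M + 2 * k).choose (M + k) : ℝ) ≠ 0 := by
    have := Nat.choose_pos (show M + k ≤ M + 2 * k by omega)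
    positivity
  rw [← hc']
  simp
  field_simp

theorem sign_aux (m : ℤ) (k : ℕ) :
    (-1 : ℝ) ^ ((|m| - m) / 2 + (k : ℤ)) * (-1 : ℝ) ^ ((m + |m|) / 2) *
      ((-1) ^ m.natAbs * (-1) ^ k) = 1 := by
  have h : (|m| - m) / 2 + (k : ℤ) + (m + |m|) / 2 = ((m.natAbs + k : ℕ) : ℤ) := by
    rcases abs_cases m with ⟨h, _⟩ | ⟨h, _⟩ <;> rw [h] <;> omega
  rw [← zpow_add₀ (by norm_num), h, zpow_natCast, ← pow_add, ← mul_pow]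
  norm_num

theorem sq_aux (m : ℤ) (k : ℕ) :
    0 ≤ (-1 : ℝ) ^ ((|m| - m) / 2 + (k : ℤ)) * PzeroM m k ∧
    ((-1 : ℝ) ^ ((|m| - m) / 2 + (k : ℤ)) * PzeroM m k) ^ 2 =
      (2 * ((m.natAbs : ℝ) + 2 * k) + 1) / (4 * Real.pi) *
        (wallisW k * wallisW (m.natAbs + k)) := by
  have hs := sign_aux m k
  unfold PzeroM alphaY
  rw [assocLegendre_zero]
  generalize m.natAbs = M at *
  set B : ℝ := (((2 * (M + k)).factorial : ℝ) /
        (2 ^ (M + 2 * k) * k.factorial * (M + k).factorial)) with hB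
  set T : ℝ := ((2 * ((M + 2 * k : ℕ) : ℝ) + 1) * ((M + 2 * k - M).factorial : ℝ) /
      (4 * Real.pi * ((M + 2 * k + M).factorial : ℝ))) with hT
  have hT0 : 0 ≤ T := by positivity
  have hB0 : 0 ≤ B := by positivity
  have key : (-1 : ℝ) ^ ((|m| - m) / 2 + (k : ℤ)) * ((-1 : ℝ) ^ ((m + |m|) / 2) * √T *
      ((-1) ^ M * ((-1) ^ k * B))) = √T * B := by
    linear_combination (√T * B) * hs
  rw [key]
  refine ⟨by positivity, ?_⟩
  rw [mul_pow, Real.sq_sqrt hT0, hT, hB]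
  unfold wallisW
  rw [show M + 2 * k - M = 2 * k by omega, show M + 2 * k + M = 2 * (M + k) by ring]
  have h0 : ((M + k).factorial : ℝ) ≠ 0 := by positivity
  have h1 : (k.factorial : ℝ) ≠ 0 := by positivity
  have h2 : ((2 * (M + k)).factorial : ℝ) ≠ 0 := by positivity
  have h4 : ∀ n : ℕ, (4 : ℝ) ^ n = 2 ^ n * 2 ^ n := fun n => by
    rw [← mul_pow]; norm_num
  rw [h4, h4]
  push_cast
  field_simp
  ring

/-- estimate (3.4) of Lemma 3.1:
`c ((|m|+2k+1)/(2k+1))^{1/4} ≤ (-1)^{(|m|-m)/2+k} α_{|m|+2k}^m P_{|m|+2k}^{|m|}(0)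
  ≤ C ((|m|+2k+1)/(2k+1))^{1/4}`. -/
theorem alpha_P_zero_bounds :
    ∃ c > 0, ∃ C > 0, ∀ (m : ℤ) (k : ℕ),
      c * (((m.natAbs : ℝ) + 2 * k + 1) / (2 * k + 1)) ^ ((1 : ℝ) / 4) ≤
        (-1 : ℝ) ^ ((|m| - m) / 2 + (k : ℤ)) * PzeroM m k ∧
      (-1 : ℝ) ^ ((|m| - m) / 2 + (k : ℤ)) * PzeroM m k ≤
        C * (((m.natAbs : ℝ) + 2 * k + 1) / (2 * k + 1)) ^ ((1 : ℝ) / 4) := by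
  refine ⟨1 / 8, by norm_num, 1, by norm_num, fun m k => ?_⟩
  obtain ⟨h0, h2⟩ := sq_aux m k
  generalize (-1 : ℝ) ^ ((|m| - m) / 2 + (k : ℤ)) * PzeroM m k = V at *
  generalize m.natAbs = M at *
  have hR0 : (0 : ℝ) ≤ ((M : ℝ) + 2 * k + 1) / (2 * k + 1) := by positivity
  have hx0 := Real.rpow_nonneg hR0 ((1 : ℝ) / 4)
  have hx4 : ((((M : ℝ) + 2 * k + 1) / (2 * k + 1)) ^ ((1 : ℝ) / 4)) ^ 4
      = ((M : ℝ) + 2 * k + 1) / (2 * k + 1) := by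
    rw [← Real.rpow_natCast, ← Real.rpow_mul hR0]
    norm_num
  generalize (((M : ℝ) + 2 * k + 1) / (2 * k + 1)) ^ ((1 : ℝ) / 4) = x at *
  have hM : (0 : ℝ) ≤ M := by positivity
  have hk : (0 : ℝ) ≤ k := by positivity
  have uk := wallisW_upper k
  have uN := wallisW_upper (M + k)
  have lk := wallisW_lower k
  have lN := wallisW_lower (M + k)
  push_cast at uN lN
  have V4 : V ^ 4 = (2 * ((M : ℝ) + 2 * k) + 1) ^ 2 / (16 * Real.pi ^ 2) *
      (wallisW k ^ 2 * wallisW (M + k) ^ 2) := by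
    rw [show V ^ 4 = (V ^ 2) ^ 2 by ring, h2]
    field_simp
    ring
  have hpi3 := Real.pi_gt_three
  have hpi4 := Real.pi_le_four
  generalize wallisW k ^ 2 = a at *
  generalize wallisW (M + k) ^ 2 = b at *
  have ha : 1 / (4 * (k : ℝ) + 1) ≤ a := by rwa [div_le_iff₀ (by positivity)]
  have hb : 1 / (4 * ((M : ℝ) + k) + 1) ≤ b := by rwa [div_le_iff₀ (by positivity)]
  have ha' : a ≤ 1 / (2 * (k : ℝ) + 1) := by rwa [le_div_iff₀ (by positivity)]
  have hb' : b ≤ 1 / (2 * ((M : ℝ) + k) + 1) := by rwa [le_div_iff₀ (by positivity)]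
  have ha0 : 0 ≤ a := le_trans (by positivity) ha
  have hb0 : 0 ≤ b := le_trans (by positivity) hb
  constructor
  · refine le_of_pow_le_pow_left₀ (n := 4) (by norm_num) h0 ?_
    rw [mul_pow, hx4, V4]
    calc (1 / 8 : ℝ) ^ 4 * (((M : ℝ) + 2 * k + 1) / (2 * k + 1))
        = ((M : ℝ) + 2 * k + 1) ^ 2 / (16 * 4 ^ 2) *
          (1 / (4 * (k : ℝ) + 2) * (1 / (8 * ((M : ℝ) + 2 * k + 1)))) := by
          have : (4 * (k : ℝ) + 2) = 2 * (2 * k + 1) := by ring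
          rw [this]
          field_simp
          norm_num
      _ ≤ (2 * ((M : ℝ) + 2 * k) + 1) ^ 2 / (16 * Real.pi ^ 2) *
          (1 / (4 * (k : ℝ) + 1) * (1 / (4 * ((M : ℝ) + k) + 1))) := by
          gcongr <;> linarith
      _ ≤ _ := by gcongr
  · refine le_of_pow_le_pow_left₀ (n := 4) (by norm_num) (by positivity) ?_
    rw [mul_pow, hx4, V4]
    calc (2 * ((M : ℝ) + 2 * k) + 1) ^ 2 / (16 * Real.pi ^ 2) * (a * b)
        ≤ (2 * ((M : ℝ) + 2 * k + 1)) ^ 2 / (16 * 1 ^ 2) *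
          (1 / (2 * (k : ℝ) + 1) * (1 / ((M : ℝ) + 2 * k + 1))) := by
          have hb'' : b ≤ 1 / ((M : ℝ) + 2 * k + 1) := by
            refine hb'.trans ?_
            exact one_div_le_one_div_of_le (by positivity) (by linarith)
          gcongr <;> linarith
      _ = 1 / 4 * (((M : ℝ) + 2 * k + 1) / (2 * k + 1)) := by
          field_simp
          norm_num
      _ ≤ _ := by
          gcongr
          norm_num

end
end

section
/- There are positive constants c and C such that for all integers m and all nonnegative integers k: c · ((|m|+1)/((2k+1)(|m|+2k+1)))^{1/4} ≤ (−3)^k Γ_k^m ≤ C · ((|m|+1)/((2k+1)(|m|+2k+1)))^{1/4}. -/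
noncomputable section

open MeasureTheory Real Filter

/-- Fourth power of the step factor `-3 γ`, for `l = |m| + 2k + 1`. -/
theorem gamma_step (m : ℤ) (k : ℕ) (n t : ℝ) (hn : n = m.natAbs) (ht : t = k) :
    0 ≤ -3 * gammaLM (m.natAbs + 2 * (k + 1) - 1) m ∧
    (-3 * gammaLM (m.natAbs + 2 * (k + 1) - 1) m) ^ 4 =
      (((n + 2 * t + 2) / (n + 2 * t + 3)) ^ 2) ^ 2 *
        ((2 * n + 4 * t + 5) / (2 * n + 4 * t + 1)) ^ 2 *
        ((2 * t + 1) / (2 * t + 2)) ^ 2 *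
        ((2 * n + 2 * t + 1) / (2 * n + 2 * t + 2)) ^ 2 := by
  have hn0 : 0 ≤ n := by rw [hn]; positivity
  have ht0 : 0 ≤ t := by rw [ht]; positivity
  have hl : ((m.natAbs + 2 * (k + 1) - 1 : ℕ) : ℝ) = n + 2 * t + 1 := by
    have : m.natAbs + 2 * (k + 1) - 1 = m.natAbs + 2 * k + 1 := by omega
    rw [this, hn, ht]; push_cast; ring
  have hA : betaLM (m.natAbs + 2 * (k + 1) - 1) m =
      Real.sqrt ((2 * t + 1) * (2 * n + 2 * t + 1) /
        ((2 * n + 4 * t + 1) * (2 * n + 4 * t + 3))) := by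
    unfold betaLM; rw [hl, ← hn]; congr 1; ring_nf
  have hB : betaLM (m.natAbs + 2 * (k + 1) - 1 + 1) m =
      Real.sqrt ((2 * t + 2) * (2 * n + 2 * t + 2) /
        ((2 * n + 4 * t + 3) * (2 * n + 4 * t + 5))) := by
    unfold betaLM; push_cast; rw [hl, ← hn]; congr 1; ring_nf
  have hg : -3 * gammaLM (m.natAbs + 2 * (k + 1) - 1) m =
      (n + 2 * t + 2) / (n + 2 * t + 3) *
      (betaLM (m.natAbs + 2 * (k + 1) - 1) m / betaLM (m.natAbs + 2 * (k + 1) - 1 + 1) m) := by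
    have hBpos : 0 < betaLM (m.natAbs + 2 * (k + 1) - 1 + 1) m := by
      rw [hB]; exact Real.sqrt_pos.mpr (by positivity)
    unfold gammaLM
    rw [hl]
    have h1 : n + 2 * t + 1 + 1 = n + 2 * t + 2 := by ring
    have h2 : n + 2 * t + 1 + 2 = n + 2 * t + 3 := by ring
    rw [h1, h2]
    field_simp
  rw [hg, hA, hB]
  refine ⟨by positivity, ?_⟩
  rw [mul_pow, div_pow (Real.sqrt _) (Real.sqrt _) 4]
  have h4 : ∀ x : ℝ, 0 ≤ x → Real.sqrt x ^ 4 = x ^ 2 := fun x hx => by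
    have := Real.sq_sqrt hx
    calc Real.sqrt x ^ 4 = (Real.sqrt x ^ 2) ^ 2 := by ring
      _ = _ := by rw [this]
  rw [h4 _ (by positivity), h4 _ (by positivity)]
  field_simp

theorem Gamma_succ (m : ℤ) (k : ℕ) : (-3 : ℝ) ^ (k + 1) * GammaKM m (k + 1) =
    ((-3 : ℝ) ^ k * GammaKM m k) * (-3 * gammaLM (m.natAbs + 2 * (k + 1) - 1) m) := by
  unfold GammaKM
  rw [Finset.prod_Icc_succ_top (by omega)]
  ring

theorem Gamma_aux (m : ℤ) (n : ℝ) (hn : n = m.natAbs) (k : ℕ) :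
    0 ≤ (-3 : ℝ) ^ k * GammaKM m k ∧
    ((-3 : ℝ) ^ k * GammaKM m k) ^ 4 ≤
      ((n + 2) / (n + 2 * k + 2)) ^ 2 * ((2 * n + 4 * k + 1) / (2 * n + 1)) ^ 2 *
        (1 / (2 * k + 1)) * ((2 * n + 1) / (2 * n + 2 * k + 1)) ∧
    ((2 * n + 3) / (2 * n + 4 * k + 3)) ^ 2 * ((2 * n + 4 * k + 1) / (2 * n + 1)) ^ 2 *
        (1 / (4 * k + 1)) * ((4 * n + 1) / (4 * n + 4 * k + 1)) ≤
      ((-3 : ℝ) ^ k * GammaKM m k) ^ 4 := by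
  have hn0 : 0 ≤ n := by rw [hn]; positivity
  induction k with
  | zero =>
    have h1 : (2 * n + 1) ≠ 0 := by positivity
    have h2 : (n + 2) ≠ 0 := by positivity
    have h3 : (2 * n + 3) ≠ 0 := by positivity
    have h4 : (4 * n + 1) ≠ 0 := by positivity
    simp [GammaKM, h1, h2, h3, h4]
  | succ k ih =>
    obtain ⟨ih0, ihU, ihL⟩ := ih
    obtain ⟨hs0, hs⟩ := gamma_step m k n k hn rfl
    rw [Gamma_succ]
    refine ⟨mul_nonneg ih0 hs0, ?_⟩
    rw [mul_pow, hs]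
    push_cast
    generalize ((-3 : ℝ) ^ k * GammaKM m k) ^ 4 = G at *
    have ht0 : (0 : ℝ) ≤ k := by positivity
    generalize (k : ℝ) = t at *
    constructor
    · have a1 : ((n + 2 * t + 2) / (n + 2 * t + 3)) ^ 2 ≤ (n + 2 * t + 2) / (n + 2 * t + 4) := by
        rw [div_pow, div_le_div_iff₀ (by positivity) (by positivity)]
        nlinarith
      have a2 : ((2 * t + 1) / (2 * t + 2)) ^ 2 ≤ (2 * t + 1) / (2 * t + 3) := by
        rw [div_pow, div_le_div_iff₀ (by positivity) (by positivity)]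
        nlinarith
      have a3 : ((2 * n + 2 * t + 1) / (2 * n + 2 * t + 2)) ^ 2 ≤
          (2 * n + 2 * t + 1) / (2 * n + 2 * t + 3) := by
        rw [div_pow, div_le_div_iff₀ (by positivity) (by positivity)]
        nlinarith
      calc _ ≤ (((n + 2) / (n + 2 * t + 2)) ^ 2 * ((2 * n + 4 * t + 1) / (2 * n + 1)) ^ 2 *
        (1 / (2 * t + 1)) * ((2 * n + 1) / (2 * n + 2 * t + 1))) *
          (((n + 2 * t + 2) / (n + 2 * t + 4)) ^ 2 *
        ((2 * n + 4 * t + 5) / (2 * n + 4 * t + 1)) ^ 2 *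
        ((2 * t + 1) / (2 * t + 3)) *
        ((2 * n + 2 * t + 1) / (2 * n + 2 * t + 3))) := by gcongr
        _ = ((n + 2) / (n + 2 * t + 4)) ^ 2 * ((2 * n + 4 * t + 5) / (2 * n + 1)) ^ 2 *
        (1 / (2 * t + 3)) * ((2 * n + 1) / (2 * n + 2 * t + 3)) := by field_simp
        _ = _ := by ring_nf
    · have a1 : (2 * n + 4 * t + 3) / (2 * n + 4 * t + 7) ≤
          ((n + 2 * t + 2) / (n + 2 * t + 3)) ^ 2 := by
        rw [div_pow, div_le_div_iff₀ (by positivity) (by positivity)]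
        nlinarith
      have a2 : (4 * t + 1) / (4 * t + 5) ≤ ((2 * t + 1) / (2 * t + 2)) ^ 2 := by
        rw [div_pow, div_le_div_iff₀ (by positivity) (by positivity)]
        nlinarith
      have a3 : (4 * n + 4 * t + 1) / (4 * n + 4 * t + 5) ≤
          ((2 * n + 2 * t + 1) / (2 * n + 2 * t + 2)) ^ 2 := by
        rw [div_pow, div_le_div_iff₀ (by positivity) (by positivity)]
        nlinarith
      calc _ = ((2 * n + 3) / (2 * n + 4 * t + 7)) ^ 2 *
            ((2 * n + 4 * t + 5) / (2 * n + 1)) ^ 2 *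
            (1 / (4 * t + 5)) * ((4 * n + 1) / (4 * n + 4 * t + 5)) := by ring_nf
        _ = (((2 * n + 3) / (2 * n + 4 * t + 3)) ^ 2 * ((2 * n + 4 * t + 1) / (2 * n + 1)) ^ 2 *
        (1 / (4 * t + 1)) * ((4 * n + 1) / (4 * n + 4 * t + 1))) *
          (((2 * n + 4 * t + 3) / (2 * n + 4 * t + 7)) ^ 2 *
        ((2 * n + 4 * t + 5) / (2 * n + 4 * t + 1)) ^ 2 *
        ((4 * t + 1) / (4 * t + 5)) *
        ((4 * n + 4 * t + 1) / (4 * n + 4 * t + 5))) := by field_simp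
        _ ≤ _ := by
          have hG : 0 ≤ G := le_trans (by positivity) ihL
          gcongr

theorem upper_final (n t : ℝ) (hn : 0 ≤ n) (ht : 0 ≤ t) :
    ((n + 2) / (n + 2 * t + 2)) ^ 2 * ((2 * n + 4 * t + 1) / (2 * n + 1)) ^ 2 *
        (1 / (2 * t + 1)) * ((2 * n + 1) / (2 * n + 2 * t + 1)) ≤
      4 ^ 4 * ((n + 1) / ((2 * t + 1) * (n + 2 * t + 1))) := by
  have b1 : (n + 2) / (2 * n + 1) ≤ 2 := by
    rw [div_le_iff₀ (by positivity)]; linarith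
  have b2 : (2 * n + 4 * t + 1) / (n + 2 * t + 2) ≤ 2 := by
    rw [div_le_iff₀ (by positivity)]; linarith
  have b3 : (2 * n + 1) / (2 * n + 2 * t + 1) ≤ 2 * ((n + 1) / (n + 2 * t + 1)) := by
    rw [← mul_div_assoc, div_le_div_iff₀ (by positivity) (by positivity)]; nlinarith [mul_nonneg hn ht]
  calc _ = ((n + 2) / (2 * n + 1)) ^ 2 * ((2 * n + 4 * t + 1) / (n + 2 * t + 2)) ^ 2 *
        (1 / (2 * t + 1)) * ((2 * n + 1) / (2 * n + 2 * t + 1)) := by field_simp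
    _ ≤ 2 ^ 2 * 2 ^ 2 * (1 / (2 * t + 1)) * (2 * ((n + 1) / (n + 2 * t + 1))) := by gcongr
    _ = 32 * ((n + 1) / ((2 * t + 1) * (n + 2 * t + 1))) := by field_simp; norm_num
    _ ≤ _ := by gcongr; norm_num

theorem lower_final (n t : ℝ) (hn : 0 ≤ n) (ht : 0 ≤ t) :
    (1 / 4) ^ 4 * ((n + 1) / ((2 * t + 1) * (n + 2 * t + 1))) ≤
    ((2 * n + 3) / (2 * n + 4 * t + 3)) ^ 2 * ((2 * n + 4 * t + 1) / (2 * n + 1)) ^ 2 *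
        (1 / (4 * t + 1)) * ((4 * n + 1) / (4 * n + 4 * t + 1)) := by
  have b1 : 1 ≤ (2 * n + 3) / (2 * n + 1) := by
    rw [le_div_iff₀ (by positivity)]; linarith
  have b2 : 1 / 3 ≤ (2 * n + 4 * t + 1) / (2 * n + 4 * t + 3) := by
    rw [le_div_iff₀ (by positivity)]; linarith
  have b3 : 1 / 4 * ((n + 1) / (n + 2 * t + 1)) ≤ (4 * n + 1) / (4 * n + 4 * t + 1) := by
    rw [← mul_div_assoc, div_le_div_iff₀ (by positivity) (by positivity)]; nlinarith [mul_nonneg hn ht]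
  have b4 : 1 / 2 * (1 / (2 * t + 1)) ≤ 1 / (4 * t + 1) := by
    rw [← mul_div_assoc, div_le_div_iff₀ (by positivity) (by positivity)]; nlinarith
  calc _ ≤ 1 / 72 * ((n + 1) / ((2 * t + 1) * (n + 2 * t + 1))) := by gcongr; norm_num
    _ = 1 ^ 2 * (1 / 3) ^ 2 * (1 / 2 * (1 / (2 * t + 1))) *
        (1 / 4 * ((n + 1) / (n + 2 * t + 1))) := by field_simp; norm_num
    _ ≤ ((2 * n + 3) / (2 * n + 1)) ^ 2 * ((2 * n + 4 * t + 1) / (2 * n + 4 * t + 3)) ^ 2 *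
        (1 / (4 * t + 1)) * ((4 * n + 1) / (4 * n + 4 * t + 1)) := by gcongr
    _ = _ := by field_simp

/-- estimate (3.5) of Lemma 3.1:
`c ((|m|+1)/((2k+1)(|m|+2k+1)))^{1/4} ≤ (-3)^k Γ_k^m
  ≤ C ((|m|+1)/((2k+1)(|m|+2k+1)))^{1/4}`. -/
theorem Gamma_bounds :
    ∃ c > 0, ∃ C > 0, ∀ (m : ℤ) (k : ℕ),
      c * (((m.natAbs : ℝ) + 1) / ((2 * k + 1) * ((m.natAbs : ℝ) + 2 * k + 1))) ^
          ((1 : ℝ) / 4) ≤ (-3 : ℝ) ^ k * GammaKM m k ∧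
      (-3 : ℝ) ^ k * GammaKM m k ≤
        C * (((m.natAbs : ℝ) + 1) / ((2 * k + 1) * ((m.natAbs : ℝ) + 2 * k + 1))) ^
          ((1 : ℝ) / 4) := by
  refine ⟨1 / 4, by norm_num, 4, by norm_num, fun m k => ?_⟩
  obtain ⟨h0, hU, hL⟩ := Gamma_aux m m.natAbs rfl k
  have hn0 : (0 : ℝ) ≤ m.natAbs := by positivity
  have ht0 : (0 : ℝ) ≤ k := by positivity
  have hU' := hU.trans (upper_final _ _ hn0 ht0)
  have hL' := (lower_final _ _ hn0 ht0).trans hL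
  have hX : 0 ≤ ((m.natAbs : ℝ) + 1) / ((2 * k + 1) * ((m.natAbs : ℝ) + 2 * k + 1)) := by
    positivity
  generalize ((m.natAbs : ℝ) + 1) / ((2 * k + 1) * ((m.natAbs : ℝ) + 2 * k + 1)) = X at *
  have hY0 : 0 ≤ X ^ ((1 : ℝ) / 4) := Real.rpow_nonneg hX _
  have hY : (X ^ ((1 : ℝ) / 4)) ^ 4 = X := by
    rw [← Real.rpow_natCast, ← Real.rpow_mul hX]; norm_num
  constructor
  · rw [← pow_le_pow_iff_left₀ (by positivity) h0 (by norm_num : (4 : ℕ) ≠ 0), mul_pow, hY]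
    exact hL'
  · rw [← pow_le_pow_iff_left₀ h0 (by positivity) (by norm_num : (4 : ℕ) ≠ 0), mul_pow 4, hY]
    exact hU'

end
end
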